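/- arXiv:2301.10945 — 6 statements merged into one kernel-verified Lean document; each statement's English description precedes it below -/
import Mathlib

section
/- Under the stated assumptions, the value function F(x) := f(x, y*(x)) is differentiable on ℝ^{d_x}, and for every x the Hessian block ∇²_{yy} g(x, y*(x)) is an invertible self-adjoint operator with all eigenvalues at least μ_g, and the hyper-gradient satisfies ∇F(x) = ∇_x f(x, y*(x)) − ∇²_{xy} g(x, y*(x)) [∇²_{yy} g(x, y*(x))]^{-1} ∇_y f(x, y*(x)). -/
open Set
open scoped RealInnerProductSpace

noncomputable section

/-!
Strong convexity makes each `∇_y g(x, ·)` strongly monotone with modulus `μ`. Hence its zero is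
unique, and its derivative `∇²_{yy} g` is bounded below by `μ`, so invertible. The implicit function
theorem applied to `∇_y g = 0` gives a local branch of zeros, which by uniqueness is `y*`, so that
`Dy* = -[∇²_{yy} g]⁻¹ (∇²_{xy} g)†`. The formula is the chain rule
`∇F = ∇_x f + (Dy*)† ∇_y f`, in which `[∇²_{yy} g]⁻¹` is self-adjoint.
-/

section StrongMonotonicity

variable {E : Type*} [NormedAddCommGroup E]

theorem apply_sub_le_of_convexOn_of_hasFDerivAt [NormedSpace ℝ E] {s : Set E} {h : E → ℝ}
    {h' : E →L[ℝ] ℝ} {a b : E} (hconv : ConvexOn ℝ s h) (ha : a ∈ s) (hb : b ∈ s)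
    (hh : HasFDerivAt h h' a) : h' (b - a) ≤ h b - h a := by
  have hline : ConvexOn ℝ (AffineMap.lineMap a b ⁻¹' s) (h ∘ AffineMap.lineMap (k := ℝ) a b) :=
    hconv.comp_affineMap _
  have hderiv : HasDerivAt (h ∘ AffineMap.lineMap (k := ℝ) a b) (h' (b - a)) 0 :=
    HasFDerivAt.comp_hasDerivAt 0 (by simpa using hh) AffineMap.hasDerivAt_lineMap
  simpa [slope_def_field] using
    hline.le_slope_of_hasDerivAt (by simpa using ha) (by simpa using hb) zero_lt_one hderiv

variable [InnerProductSpace ℝ E]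

theorem inner_sub_add_le_of_strongConvexOn_of_hasGradientAt [CompleteSpace E] {s : Set E}
    {h : E → ℝ} {μ : ℝ} {a b ga : E} (hsc : StrongConvexOn s μ h) (ha : a ∈ s) (hb : b ∈ s)
    (hh : HasGradientAt h ga a) : ⟪ga, b - a⟫ + μ / 2 * ‖b - a‖ ^ 2 ≤ h b - h a := by
  have hconv := strongConvexOn_iff_convex.1 hsc
  have hderiv := hh.hasFDerivAt.sub ((hasStrictFDerivAt_norm_sq a).hasFDerivAt.const_mul (μ / 2))
  have hle : ⟪ga, b - a⟫ - μ / 2 * (2 * ⟪a, b - a⟫) ≤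
      h b - μ / 2 * ‖b‖ ^ 2 - (h a - μ / 2 * ‖a‖ ^ 2) := by
    simpa using apply_sub_le_of_convexOn_of_hasFDerivAt hconv ha hb hderiv
  have hnorm : ‖b‖ ^ 2 = ‖a‖ ^ 2 + 2 * ⟪a, b - a⟫ + ‖b - a‖ ^ 2 := by
    rw [← norm_add_sq_real, add_sub_cancel]
  rw [hnorm] at hle
  linarith

theorem mul_norm_sq_le_inner_sub_of_strongConvexOn [CompleteSpace E] {s : Set E} {h : E → ℝ}
    {μ : ℝ} {a b ga gb : E} (hsc : StrongConvexOn s μ h) (ha : a ∈ s) (hb : b ∈ s)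
    (hha : HasGradientAt h ga a) (hhb : HasGradientAt h gb b) :
    μ * ‖b - a‖ ^ 2 ≤ ⟪gb - ga, b - a⟫ := by
  have hab := inner_sub_add_le_of_strongConvexOn_of_hasGradientAt hsc ha hb hha
  have hba := inner_sub_add_le_of_strongConvexOn_of_hasGradientAt hsc hb ha hhb
  rw [← neg_sub b a, inner_neg_right, norm_neg] at hba
  rw [inner_sub_left]
  linarith

theorem injective_of_mul_norm_sq_le_inner_sub {T : E → E} {μ : ℝ} (hμ : 0 < μ)
    (hT : ∀ a b, μ * ‖b - a‖ ^ 2 ≤ ⟪T b - T a, b - a⟫) : Function.Injective T := by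
  intro a b hab
  have hle : μ * ‖b - a‖ ^ 2 ≤ 0 := by simpa [hab] using hT a b
  have hzero : ‖b - a‖ ^ 2 = 0 := by nlinarith [sq_nonneg ‖b - a‖]
  exact (sub_eq_zero.1 (by simpa using hzero)).symm

theorem mul_norm_sq_le_inner_of_hasFDerivAt {T : E → E} {T' : E →L[ℝ] E} {μ : ℝ} {a : E}
    (hT' : HasFDerivAt T T' a) (hT : ∀ᶠ b in nhds a, μ * ‖b - a‖ ^ 2 ≤ ⟪T b - T a, b - a⟫) (v : E) :
    μ * ‖v‖ ^ 2 ≤ ⟪T' v, v⟫ := by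
  have hquot : Filter.Tendsto (fun c : ℝ => ⟪c • (T (a + c⁻¹ • v) - T a), v⟫) Filter.atTop
      (nhds ⟪T' v, v⟫) :=
    (hT'.lim v Filter.tendsto_abs_atTop_atTop).inner tendsto_const_nhds
  have hpath : Filter.Tendsto (fun c : ℝ => a + c⁻¹ • v) Filter.atTop (nhds a) := by
    simpa using ((tendsto_inv_atTop_zero (𝕜 := ℝ)).smul_const v).const_add a
  refine ge_of_tendsto hquot ?_
  filter_upwards [Filter.eventually_gt_atTop 0, hpath.eventually hT] with c hc hle
  rw [add_sub_cancel_left, norm_smul, inner_smul_right, Real.norm_of_nonneg (by positivity)] at hle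
  rw [real_inner_smul_left]
  calc μ * ‖v‖ ^ 2 = c ^ 2 * (μ * (c⁻¹ * ‖v‖) ^ 2) := by field_simp
    _ ≤ c ^ 2 * (c⁻¹ * ⟪T (a + c⁻¹ • v) - T a, v⟫) := by gcongr
    _ = c * ⟪T (a + c⁻¹ • v) - T a, v⟫ := by field_simp

theorem isInvertible_of_mul_norm_sq_le_inner [CompleteSpace E] {T : E →L[ℝ] E} {μ : ℝ}
    (hμ : 0 < μ) (hT : ∀ v, μ * ‖v‖ ^ 2 ≤ ⟪T v, v⟫) : T.IsInvertible := by
  have hunit : IsUnit T :=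
    ContinuousLinearMap.isUnit_of_forall_le_norm_inner_map T (c := ⟨μ, hμ.le⟩) hμ fun v =>
      calc ‖v‖ ^ 2 * μ = μ * ‖v‖ ^ 2 := mul_comm _ _
        _ ≤ ⟪T v, v⟫ := hT v
        _ ≤ ‖⟪T v, v⟫‖ := le_abs_self _
  exact ⟨ContinuousLinearEquiv.ofUnit hunit.unit, rfl⟩

theorem isSelfAdjoint_inverse [CompleteSpace E] {T : E →L[ℝ] E} (hT : IsSelfAdjoint T) :
    IsSelfAdjoint T.inverse := by
  rw [← ContinuousLinearMap.ringInverse_eq_inverse]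
  exact (Ring.inverse_star T).symm.trans (congrArg Ring.inverse hT)

end StrongMonotonicity

theorem hasStrictFDerivAt_of_unique_solution {𝕜 X Y Z : Type*} [NontriviallyNormedField 𝕜]
    [NormedAddCommGroup X] [NormedSpace 𝕜 X] [CompleteSpace X]
    [NormedAddCommGroup Y] [NormedSpace 𝕜 Y] [CompleteSpace Y]
    [NormedAddCommGroup Z] [NormedSpace 𝕜 Z] [CompleteSpace Z]
    {G : X × Y → Z} {G' : X × Y →L[𝕜] Z} {s : X → Y} {x : X}
    (hG : HasStrictFDerivAt G G' (x, s x)) (hG' : (G' ∘L .inr 𝕜 X Y).IsInvertible)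
    (hs : ∀ᶠ z in nhds x, ∀ y, G (z, y) = G (x, s x) → y = s z) :
    HasStrictFDerivAt s (-(G' ∘L .inr 𝕜 X Y).inverse ∘L (G' ∘L .inl 𝕜 X Y)) x := by
  refine (hG.hasStrictFDerivAt_implicitFunctionOfProdDomain hG').congr_of_eventuallyEq ?_
  filter_upwards [hG.eventually_apply_implicitFunctionOfProdDomain hG', hs] with z hz huniq
  exact huniq _ hz

section PartialGradient

open ContinuousLinearMap

variable {X Y : Type*} [NormedAddCommGroup Y] [InnerProductSpace ℝ Y] [CompleteSpace Y]

/-- The partial gradient `∇_y g` in the second variable, whose zeros are the lower-level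
minimizers and whose derivative carries the Hessian blocks `∇²_{yy} g` and `∇²_{xy} g`. -/
def sndGradient (g : X × Y → ℝ) (p : X × Y) : Y :=
  gradient (fun y => g (p.1, y)) p.2

theorem sndGradient_eq_zero_of_isLocalMin {g : X × Y → ℝ} {p : X × Y}
    (hmin : IsLocalMin (fun y => g (p.1, y)) p.2) : sndGradient g p = 0 := by
  simp [sndGradient, gradient, hmin.fderiv_eq_zero]

variable [NormedAddCommGroup X] [NormedSpace ℝ X]

theorem hasGradientAt_sndGradient {g : X × Y → ℝ} {p : X × Y} (hg : DifferentiableAt ℝ g p) :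
    HasGradientAt (fun y => g (p.1, y)) (sndGradient g p) p.2 :=
  (hg.comp p.2 (hasFDerivAt_prodMk_right p.1 p.2).differentiableAt).hasGradientAt

theorem toDual_sndGradient {g : X × Y → ℝ} {p : X × Y} (hg : DifferentiableAt ℝ g p) :
    InnerProductSpace.toDual ℝ Y (sndGradient g p) = fderiv ℝ g p ∘L inr ℝ X Y :=
  (hasGradientAt_sndGradient hg).hasFDerivAt.unique
    (hg.hasFDerivAt.comp p.2 (hasFDerivAt_prodMk_right p.1 p.2))

theorem inner_sndGradient {g : X × Y → ℝ} {p : X × Y} (hg : DifferentiableAt ℝ g p) (w : Y) :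
    ⟪sndGradient g p, w⟫ = fderiv ℝ g p (0, w) :=
  DFunLike.congr_fun (toDual_sndGradient hg) w

theorem contDiff_sndGradient {n : WithTop ℕ∞} {g : X × Y → ℝ} (hg : ContDiff ℝ (n + 1) g) :
    ContDiff ℝ n (sndGradient g) := by
  have hriesz : sndGradient g =
      fun p => (InnerProductSpace.toDual ℝ Y).symm (fderiv ℝ g p ∘L inr ℝ X Y) := by
    ext1 p
    rw [← toDual_sndGradient (hg.differentiable (by simp) p), LinearIsometryEquiv.symm_apply_apply]
  rw [hriesz]
  exact (InnerProductSpace.toDual ℝ Y).symm.contDiff.comp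
    ((hg.fderiv_right le_rfl).clm_comp contDiff_const)

theorem hasStrictFDerivAt_sndGradient {g : X × Y → ℝ} (hg : ContDiff ℝ 2 g) (p : X × Y) :
    HasStrictFDerivAt (sndGradient g) (fderiv ℝ (sndGradient g) p) p :=
  (contDiff_sndGradient (n := 1) hg).contDiffAt.hasStrictFDerivAt one_ne_zero

theorem inner_fderiv_sndGradient {g : X × Y → ℝ} (hg : ContDiff ℝ 2 g) (p q : X × Y) (w : Y) :
    ⟪fderiv ℝ (sndGradient g) p q, w⟫ = fderiv ℝ (fderiv ℝ g) p q (0, w) := by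
  have hinner : (fun p => ⟪sndGradient g p, w⟫) = fun p => fderiv ℝ g p (0, w) :=
    funext fun p => inner_sndGradient (hg.differentiable two_ne_zero p) w
  have hleft : HasFDerivAt (fun p => ⟪sndGradient g p, w⟫) _ p :=
    (hasStrictFDerivAt_sndGradient hg p).hasFDerivAt.inner ℝ (hasFDerivAt_const w p)
  have hright : HasFDerivAt (fun p => fderiv ℝ g p (0, w)) _ p :=
    ((hg.fderiv_right (m := 1) le_rfl).differentiable one_ne_zero p).hasFDerivAt.clm_apply
      (hasFDerivAt_const (0, w) p)
  rw [hinner] at hleft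
  simpa using DFunLike.congr_fun (hleft.unique hright) q

/-- The Hessian block `∇²_{yy} g`, the operator on the second factor that the hypergradient inverts.
It is defined as the partial derivative of `∇_y g` in the second variable. -/
def sndHessian (g : X × Y → ℝ) (p : X × Y) : Y →L[ℝ] Y :=
  fderiv ℝ (sndGradient g) p ∘L inr ℝ X Y

theorem inner_sndHessian {g : X × Y → ℝ} (hg : ContDiff ℝ 2 g) (p : X × Y) (v w : Y) :
    ⟪sndHessian g p v, w⟫ = fderiv ℝ (fderiv ℝ g) p (0, v) (0, w) :=
  inner_fderiv_sndGradient hg p (0, v) w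

theorem isSelfAdjoint_sndHessian {g : X × Y → ℝ} (hg : ContDiff ℝ 2 g) (p : X × Y) :
    IsSelfAdjoint (sndHessian g p) := by
  refine isSelfAdjoint_iff_isSymmetric.2 fun v w => ?_
  have hsymm : IsSymmSndFDerivAt ℝ g p := hg.contDiffAt.isSymmSndFDerivAt (by simp)
  calc ⟪sndHessian g p v, w⟫
      = fderiv ℝ (fderiv ℝ g) p (0, v) (0, w) := inner_sndHessian hg p v w
    _ = fderiv ℝ (fderiv ℝ g) p (0, w) (0, v) := hsymm.eq _ _
    _ = ⟪sndHessian g p w, v⟫ := (inner_sndHessian hg p w v).symm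
    _ = ⟪v, sndHessian g p w⟫ := real_inner_comm _ _

theorem mul_norm_sq_le_inner_sndGradient_sub {g : X × Y → ℝ} {μ : ℝ} {x : X}
    (hg : Differentiable ℝ g) (hsc : StrongConvexOn univ μ fun y => g (x, y)) (a b : Y) :
    μ * ‖b - a‖ ^ 2 ≤ ⟪sndGradient g (x, b) - sndGradient g (x, a), b - a⟫ :=
  mul_norm_sq_le_inner_sub_of_strongConvexOn hsc (mem_univ a) (mem_univ b)
    (hasGradientAt_sndGradient (hg (x, a))) (hasGradientAt_sndGradient (hg (x, b)))

theorem mul_norm_sq_le_inner_sndHessian {g : X × Y → ℝ} {μ : ℝ} {x : X} (hg : ContDiff ℝ 2 g)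
    (hsc : StrongConvexOn univ μ fun y => g (x, y)) (y v : Y) :
    μ * ‖v‖ ^ 2 ≤ ⟪sndHessian g (x, y) v, v⟫ :=
  mul_norm_sq_le_inner_of_hasFDerivAt
    ((hasStrictFDerivAt_sndGradient hg (x, y)).hasFDerivAt.comp y (hasFDerivAt_prodMk_right x y))
    (.of_forall (mul_norm_sq_le_inner_sndGradient_sub (hg.differentiable two_ne_zero) hsc y)) v

theorem isInvertible_sndHessian {g : X × Y → ℝ} {μ : ℝ} {x : X} (hμ : 0 < μ) (hg : ContDiff ℝ 2 g)
    (hsc : StrongConvexOn univ μ fun y => g (x, y)) (y : Y) :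
    (sndHessian g (x, y)).IsInvertible :=
  isInvertible_of_mul_norm_sq_le_inner hμ (mul_norm_sq_le_inner_sndHessian hg hsc y)

theorem hasStrictFDerivAt_minimizer [CompleteSpace X] {g : X × Y → ℝ} {μ : ℝ} (hμ : 0 < μ)
    (hg : ContDiff ℝ 2 g) (hsc : ∀ x, StrongConvexOn univ μ fun y => g (x, y)) {ystar : X → Y}
    (hystar : ∀ x y, g (x, ystar x) ≤ g (x, y)) (x : X) :
    HasStrictFDerivAt ystar (-(sndHessian g (x, ystar x)).inverse ∘L
      (fderiv ℝ (sndGradient g) (x, ystar x) ∘L inl ℝ X Y)) x := by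
  have hcrit (z : X) : sndGradient g (z, ystar z) = 0 :=
    sndGradient_eq_zero_of_isLocalMin (.of_forall (hystar z))
  have hinj (z : X) : Function.Injective fun y => sndGradient g (z, y) :=
    injective_of_mul_norm_sq_le_inner_sub hμ
      (mul_norm_sq_le_inner_sndGradient_sub (hg.differentiable two_ne_zero) (hsc z))
  refine hasStrictFDerivAt_of_unique_solution (hasStrictFDerivAt_sndGradient hg _)
    (isInvertible_sndHessian hμ hg (hsc x) _) (.of_forall fun z y hy => hinj z ?_)
  exact hy.trans ((hcrit x).trans (hcrit z).symm)

end PartialGradient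

section Hypergradient

open ContinuousLinearMap

variable {X Y : Type*} [NormedAddCommGroup X] [InnerProductSpace ℝ X] [CompleteSpace X]
  [NormedAddCommGroup Y] [InnerProductSpace ℝ Y] [CompleteSpace Y]

/-- The Hessian block `∇²_{xy} g`, the operator from the second factor to the first through which
`y*` contributes to the hypergradient. It is the adjoint of the partial derivative of `∇_y g` in the
first variable. -/
def mixedHessian (g : X × Y → ℝ) (p : X × Y) : Y →L[ℝ] X :=
  adjoint (fderiv ℝ (sndGradient g) p ∘L inl ℝ X Y)

theorem inner_mixedHessian {g : X × Y → ℝ} (hg : ContDiff ℝ 2 g) (p : X × Y) (v : Y) (u : X) :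
    ⟪mixedHessian g p v, u⟫ = fderiv ℝ (fderiv ℝ g) p (u, 0) (0, v) := by
  rw [mixedHessian, adjoint_inner_left, real_inner_comm]
  exact inner_fderiv_sndGradient hg p (u, 0) v

theorem hasGradientAt_comp_prodMk {f : X × Y → ℝ} {s : X → Y} {s' : X →L[ℝ] Y} {x : X}
    (hf : DifferentiableAt ℝ f (x, s x)) (hs : HasFDerivAt s s' x) :
    HasGradientAt (fun z => f (z, s z))
      (gradient (fun z => f (z, s x)) x + adjoint s' (sndGradient f (x, s x))) x := by
  have hfst : fderiv ℝ (fun z => f (z, s x)) x = fderiv ℝ f (x, s x) ∘L inl ℝ X Y :=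
    (hf.hasFDerivAt.comp x (hasFDerivAt_prodMk_left x (s x))).fderiv
  refine (hf.hasFDerivAt.comp x ((hasFDerivAt_id x).prodMk hs)).congr_fderiv ?_
  ext u
  calc fderiv ℝ f (x, s x) (u, s' u)
      = fderiv ℝ f (x, s x) (u, 0) + fderiv ℝ f (x, s x) (0, s' u) := by simp [← map_add]
    _ = ⟪gradient (fun z => f (z, s x)) x, u⟫ + ⟪sndGradient f (x, s x), s' u⟫ := by
      rw [inner_gradient_left, hfst, inner_sndGradient hf]
      rfl
    _ = ⟪gradient (fun z => f (z, s x)) x + adjoint s' (sndGradient f (x, s x)), u⟫ := by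
      rw [inner_add_left, adjoint_inner_left]

theorem hasGradientAt_hypergradient {f g : X × Y → ℝ} {μ : ℝ} (hμ : 0 < μ) (hg : ContDiff ℝ 2 g)
    (hsc : ∀ x, StrongConvexOn univ μ fun y => g (x, y)) {ystar : X → Y}
    (hystar : ∀ x y, g (x, ystar x) ≤ g (x, y)) {x : X}
    (hf : DifferentiableAt ℝ f (x, ystar x)) :
    HasGradientAt (fun z => f (z, ystar z))
      (gradient (fun z => f (z, ystar x)) x - mixedHessian g (x, ystar x)
        ((sndHessian g (x, ystar x)).inverse (sndGradient f (x, ystar x)))) x := by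
  have hinv : adjoint (sndHessian g (x, ystar x)).inverse = (sndHessian g (x, ystar x)).inverse :=
    (isSelfAdjoint_inverse (isSelfAdjoint_sndHessian hg _)).adjoint_eq
  have hchain := hasGradientAt_comp_prodMk hf
    (hasStrictFDerivAt_minimizer hμ hg hsc hystar x).hasFDerivAt
  rwa [map_neg, adjoint_comp, hinv, neg_apply, ← sub_eq_add_neg] at hchain

theorem hypergradient_formula_general {f g : X × Y → ℝ} {μg : ℝ} (hμg : 0 < μg)
    (hf : Differentiable ℝ f) (hg : ContDiff ℝ 2 g)
    (hsc : ∀ x, StrongConvexOn univ μg fun y => g (x, y)) {ystar : X → Y}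
    (hystar : ∀ x y, g (x, ystar x) ≤ g (x, y)) :
    Differentiable ℝ (fun x => f (x, ystar x)) ∧
    ∀ x, ∃ (Hyy : Y →L[ℝ] Y) (Hxy : Y →L[ℝ] X) (Hinv : Y →L[ℝ] Y),
        (∀ v w, ⟪Hyy v, w⟫ = fderiv ℝ (fderiv ℝ g) (x, ystar x) (0, v) (0, w)) ∧
        (∀ v u, ⟪Hxy v, u⟫ = fderiv ℝ (fderiv ℝ g) (x, ystar x) (u, 0) (0, v)) ∧
        IsSelfAdjoint Hyy ∧
        (∀ v, μg * ‖v‖ ^ 2 ≤ ⟪Hyy v, v⟫) ∧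
        Hyy.comp Hinv = ContinuousLinearMap.id ℝ Y ∧
        Hinv.comp Hyy = ContinuousLinearMap.id ℝ Y ∧
        gradient (fun x' => f (x', ystar x')) x =
          gradient (fun x' => f (x', ystar x)) x -
            Hxy (Hinv (gradient (fun y' => f (x, y')) (ystar x))) := by
  have hgrad (x : X) := hasGradientAt_hypergradient hμg hg hsc hystar (hf (x, ystar x))
  refine ⟨fun x => (hgrad x).differentiableAt, fun x => ?_⟩
  have hinv := isInvertible_sndHessian hμg hg (hsc x) (ystar x)
  exact ⟨sndHessian g (x, ystar x), mixedHessian g (x, ystar x),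
    (sndHessian g (x, ystar x)).inverse, inner_sndHessian hg _, inner_mixedHessian hg _,
    isSelfAdjoint_sndHessian hg _, mul_norm_sq_le_inner_sndHessian hg (hsc x) _,
    hinv.self_comp_inverse, hinv.inverse_comp_self, (hgrad x).gradient⟩

end Hypergradient

theorem hypergradient_formula
    (dx dy : ℕ)
    (f g : EuclideanSpace ℝ (Fin dx) × EuclideanSpace ℝ (Fin dy) → ℝ)
    (lf0 lf1 lg1 lg2 μg : ℝ)
    (hμg : 0 < μg)
    (hf : ContDiff ℝ 1 f)
    (hf1 : ∀ p q, ‖fderiv ℝ f p - fderiv ℝ f q‖ ≤ lf1 * ‖p - q‖)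
    (hg : ContDiff ℝ 2 g)
    (hg1 : ∀ p q, ‖fderiv ℝ g p - fderiv ℝ g q‖ ≤ lg1 * ‖p - q‖)
    (hg2 : ∀ p q, ‖fderiv ℝ (fderiv ℝ g) p - fderiv ℝ (fderiv ℝ g) q‖ ≤ lg2 * ‖p - q‖)
    (hfy0 : ∀ x y, ‖gradient (fun y' => f (x, y')) y‖ ≤ lf0)
    (hsc : ∀ x, StrongConvexOn univ μg (fun y => g (x, y)))
    (ystar : EuclideanSpace ℝ (Fin dx) → EuclideanSpace ℝ (Fin dy))
    (hystar : ∀ x y, g (x, ystar x) ≤ g (x, y)) :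
    Differentiable ℝ (fun x => f (x, ystar x)) ∧
    ∀ x : EuclideanSpace ℝ (Fin dx),
      ∃ Hyy : EuclideanSpace ℝ (Fin dy) →L[ℝ] EuclideanSpace ℝ (Fin dy),
      ∃ Hxy : EuclideanSpace ℝ (Fin dy) →L[ℝ] EuclideanSpace ℝ (Fin dx),
      ∃ Hinv : EuclideanSpace ℝ (Fin dy) →L[ℝ] EuclideanSpace ℝ (Fin dy),
        (∀ v w : EuclideanSpace ℝ (Fin dy),
            ⟪Hyy v, w⟫ = fderiv ℝ (fderiv ℝ g) (x, ystar x) (0, v) (0, w)) ∧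
        (∀ (v : EuclideanSpace ℝ (Fin dy)) (u : EuclideanSpace ℝ (Fin dx)),
            ⟪Hxy v, u⟫ = fderiv ℝ (fderiv ℝ g) (x, ystar x) (u, 0) (0, v)) ∧
        IsSelfAdjoint Hyy ∧
        (∀ v : EuclideanSpace ℝ (Fin dy), μg * ‖v‖ ^ 2 ≤ ⟪Hyy v, v⟫) ∧
        Hyy.comp Hinv = ContinuousLinearMap.id ℝ (EuclideanSpace ℝ (Fin dy)) ∧
        Hinv.comp Hyy = ContinuousLinearMap.id ℝ (EuclideanSpace ℝ (Fin dy)) ∧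
        gradient (fun x' => f (x', ystar x')) x =
          gradient (fun x' => f (x', ystar x)) x -
            Hxy (Hinv (gradient (fun y' => f (x, y')) (ystar x))) :=
  hypergradient_formula_general hμg (hf.differentiable one_ne_zero) hg hsc hystar
end
end

section
/- For every λ ≥ 2 l_{f,1}/μ_g, the function L*_λ(x) := min_y L_λ(x,y) is differentiable in x and its gradient equals ∇L*_λ(x) = ∇_x L_λ(x, y*_λ(x)) = ∇_x f(x, y*_λ(x)) + λ (∇_x g(x, y*_λ(x)) − ∇_x g(x, y*(x))); in particular ∇L*_λ(x) can be evaluated using only first-order derivatives of f and g. -/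
open Set

noncomputable section

/-!
The value function `x ↦ h (x, Y x)` of a parametrized minimization problem is squeezed between
`x' ↦ h (x', Y x') - h (x, Y x')` and `x' ↦ h (x', Y x) - h (x, Y x)`. If `h` is strictly
differentiable at `(x, Y x)` and `Y` is continuous at `x`, both have the same linear part, the
partial derivative of `h` in `x`: no derivative of `Y` is needed. Continuity of `Y` comes from the
error bound `m * ‖Y x' - Y x‖ ≤ ‖∂_y h (x', Y x)‖` for an `m`-strongly monotone partial derivative.

This applies to `g`, and to the penalized objective `f + lam * g`, whose partial derivative is
`(lam * μ - l)`-strongly monotone. When that constant is not usable, because `l < 0`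
(the space of `y` is a point) or `l = lam = 0` (each `f (x, ·)` is affine and has a minimizer, so
it is constant), the penalized objective does not depend on `y` at all.
-/

open Filter Topology

section StronglyMonotone

variable {F : Type*} [NormedAddCommGroup F] [NormedSpace ℝ F] {m n c : ℝ} {A B : F → StrongDual ℝ F}

/-- Strong monotonicity with constant `m` of a map into the dual, the property of derivatives of
`m`-strongly convex functions. The constant may be negative (weak monotonicity), so that the
constants of a strongly monotone map and of a Lipschitz perturbation add up. -/
def StronglyMonotone (m : ℝ) (A : F → StrongDual ℝ F) : Prop :=
  ∀ y z, m * ‖z - y‖ ^ 2 ≤ (A z - A y) (z - y)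

theorem StronglyMonotone.add (hA : StronglyMonotone m A) (hB : StronglyMonotone n B) :
    StronglyMonotone (m + n) (A + B) := by
  intro y z
  have hAyz := hA y z
  have hByz := hB y z
  simp only [Pi.add_apply, sub_apply, add_apply] at hAyz hByz ⊢
  linarith

theorem StronglyMonotone.const_smul (hA : StronglyMonotone m A) (hc : 0 ≤ c) :
    StronglyMonotone (c * m) (c • A) := by
  intro y z
  simpa [mul_sub, mul_assoc] using mul_le_mul_of_nonneg_left (hA y z) hc

theorem StronglyMonotone.of_norm_sub_le (hA : ∀ y z, ‖A z - A y‖ ≤ c * ‖z - y‖) :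
    StronglyMonotone (-c) A := by
  intro y z
  have habs : |(A z - A y) (z - y)| ≤ c * ‖z - y‖ * ‖z - y‖ :=
    (A z - A y).le_of_opNorm_le (hA y z) (z - y)
  linarith [neg_le_of_abs_le habs]

theorem StronglyMonotone.mul_norm_sub_le (hA : StronglyMonotone m A) (y z : F) :
    m * ‖z - y‖ ≤ ‖A z - A y‖ := by
  rcases (norm_nonneg (z - y)).eq_or_lt with hzero | hpos
  · simp [← hzero]
  · refine le_of_mul_le_mul_right ?_ hpos
    calc m * ‖z - y‖ * ‖z - y‖ = m * ‖z - y‖ ^ 2 := by ring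
      _ ≤ (A z - A y) (z - y) := hA y z
      _ ≤ ‖A z - A y‖ * ‖z - y‖ := (le_abs_self _).trans ((A z - A y).le_opNorm (z - y))

theorem fderiv_add_sq_le_of_strongConvexOn {s : Set F} {φ : F → ℝ} {φ' : StrongDual ℝ F} {y z : F}
    (hφ : StrongConvexOn s m φ) (hφ' : HasFDerivAt φ φ' y) (hy : y ∈ s) (hz : z ∈ s) :
    φ' (z - y) + m / 2 * ‖z - y‖ ^ 2 ≤ φ z - φ y := by
  have hslope : Tendsto (fun t : ℝ => t⁻¹ • (φ (y + t • (z - y)) - φ y)) (𝓝[>] 0)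
      (𝓝 (φ' (z - y))) :=
    (hφ'.hasLineDerivAt (z - y)).tendsto_slope_zero_right
  have hbound : Tendsto (fun t : ℝ => φ z - φ y - (1 - t) * (m / 2 * ‖z - y‖ ^ 2)) (𝓝[>] 0)
      (𝓝 (φ z - φ y - (1 - 0) * (m / 2 * ‖z - y‖ ^ 2))) :=
    (Continuous.tendsto (by fun_prop) 0).mono_left nhdsWithin_le_nhds
  have hslope_le : ∀ᶠ t : ℝ in 𝓝[>] 0, t⁻¹ • (φ (y + t • (z - y)) - φ y) ≤
      φ z - φ y - (1 - t) * (m / 2 * ‖z - y‖ ^ 2) := by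
    filter_upwards [Ioo_mem_nhdsGT (zero_lt_one' ℝ)] with t ht
    have hconv := hφ.2 hy hz (sub_nonneg.2 ht.2.le) ht.1.le (by ring)
    have hpoint : (1 - t) • y + t • z = y + t • (z - y) := by module
    rw [hpoint, norm_sub_rev y z] at hconv
    simp only [smul_eq_mul] at hconv ⊢
    rw [inv_mul_le_iff₀ ht.1]
    linarith
  linarith [le_of_tendsto_of_tendsto hslope hbound hslope_le]

theorem stronglyMonotone_fderiv_of_strongConvexOn {φ : F → ℝ} (hφ : StrongConvexOn univ m φ)
    (hd : Differentiable ℝ φ) : StronglyMonotone m (fderiv ℝ φ) := by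
  intro y z
  have hyz := fderiv_add_sq_le_of_strongConvexOn hφ (hd y).hasFDerivAt (mem_univ y) (mem_univ z)
  have hzy := fderiv_add_sq_le_of_strongConvexOn hφ (hd z).hasFDerivAt (mem_univ z) (mem_univ y)
  rw [← neg_sub z y, map_neg, norm_neg] at hzy
  rw [sub_apply]
  linarith

end StronglyMonotone

section ParametrizedMinimization

variable {X E F : Type*} [TopologicalSpace X] [NormedAddCommGroup E] [NormedSpace ℝ E]
  [NormedAddCommGroup F] [NormedSpace ℝ F]

theorem continuousAt_minimizer_of_stronglyMonotone {h : X → F → ℝ} {m : ℝ} (hm : 0 < m)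
    (hmono : ∀ x, StronglyMonotone m (fderiv ℝ (h x))) {Y : X → F} (hY : ∀ x y, h x (Y x) ≤ h x y)
    {x : X} (hcont : ContinuousAt (fun x' => fderiv ℝ (h x') (Y x)) x) : ContinuousAt Y x := by
  have hcrit : ∀ x', fderiv ℝ (h x') (Y x') = 0 := fun x' =>
    IsLocalMin.fderiv_eq_zero (.of_forall (hY x'))
  have herror : ∀ x', ‖Y x' - Y x‖ ≤ m⁻¹ * ‖fderiv ℝ (h x') (Y x)‖ := fun x' => by
    rw [le_inv_mul_iff₀ hm]
    simpa [hcrit x'] using (hmono x').mul_norm_sub_le (Y x) (Y x')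
  have hlim : Tendsto (fun x' => m⁻¹ * ‖fderiv ℝ (h x') (Y x)‖) (𝓝 x) (𝓝 0) := by
    simpa [hcrit x] using hcont.norm.tendsto.const_mul m⁻¹
  exact tendsto_iff_norm_sub_tendsto_zero.2 (squeeze_zero (fun _ => norm_nonneg _) herror hlim)

theorem hasFDerivAt_value_of_continuousAt_minimizer {h : E × F → ℝ} {h' : StrongDual ℝ (E × F)}
    {Y : E → F} (hY : ∀ x y, h (x, Y x) ≤ h (x, y)) {x : E} (hYx : ContinuousAt Y x)
    (hh : HasStrictFDerivAt h h' (x, Y x)) :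
    HasFDerivAt (fun x' => h (x', Y x')) (h'.comp (.inl ℝ E F)) x := by
  rw [hasFDerivAt_iff_isLittleO, Asymptotics.isLittleO_iff]
  intro c hc
  have hstrict := Asymptotics.isLittleO_iff.1 hh.isLittleO hc
  have hlower : Tendsto (fun x' => ((x', Y x'), (x, Y x'))) (𝓝 x) (𝓝 ((x, Y x), (x, Y x))) :=
    (continuousAt_id.prodMk hYx).prodMk (continuousAt_const.prodMk hYx)
  have hupper : Tendsto (fun x' => ((x', Y x), (x, Y x))) (𝓝 x) (𝓝 ((x, Y x), (x, Y x))) :=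
    Continuous.tendsto (by fun_prop) x
  filter_upwards [hlower.eventually hstrict, hupper.eventually hstrict] with x' hl hu
  simp only [Prod.mk_sub_mk, sub_self, Prod.norm_mk, norm_zero, norm_nonneg, sup_of_le_left,
    Real.norm_eq_abs, abs_le, ContinuousLinearMap.comp_apply,
    ContinuousLinearMap.inl_apply] at hl hu ⊢
  constructor
  · linarith [hY x (Y x')]
  · linarith [hY x' (Y x)]

theorem hasFDerivAt_value_of_stronglyMonotone {h : E × F → ℝ} (hh : ContDiff ℝ 1 h) {m : ℝ}
    (hm : 0 < m) (hmono : ∀ x, StronglyMonotone m (fderiv ℝ fun y => h (x, y))) {Y : E → F}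
    (hY : ∀ x y, h (x, Y x) ≤ h (x, y)) (x : E) :
    HasFDerivAt (fun x' => h (x', Y x')) (fderiv ℝ (fun x' => h (x', Y x)) x) x := by
  have hcont : Continuous fun x' => fderiv ℝ (fun y => h (x', y)) (Y x) :=
    Continuous.fderiv_one (f := fun x' y => h (x', y)) hh continuous_const
  have hYx : ContinuousAt Y x :=
    continuousAt_minimizer_of_stronglyMonotone (h := fun x' y => h (x', y)) hm hmono hY
      hcont.continuousAt
  have hstrict := hh.contDiffAt.hasStrictFDerivAt (x := (x, Y x)) one_ne_zero
  have hpartial : HasFDerivAt (fun x' => h (x', Y x))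
      ((fderiv ℝ h (x, Y x)).comp (.inl ℝ E F)) x :=
    hstrict.hasFDerivAt.comp (f := fun x' => (x', Y x)) x (hasFDerivAt_prodMk_left x (Y x))
  exact (hasFDerivAt_value_of_continuousAt_minimizer hY hYx hstrict).congr_fderiv
    hpartial.fderiv.symm

end ParametrizedMinimization

section Penalization

variable {E F : Type*} [NormedAddCommGroup E] [NormedSpace ℝ E]
  [NormedAddCommGroup F] [NormedSpace ℝ F] {f g : E × F → ℝ} {l μ lam : ℝ}

theorem norm_fderiv_prodMk_right_sub_le (hf : Differentiable ℝ f)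
    (hfl : ∀ p q, ‖fderiv ℝ f p - fderiv ℝ f q‖ ≤ l * ‖p - q‖) (x : E) (y z : F) :
    ‖fderiv ℝ (fun w => f (x, w)) z - fderiv ℝ (fun w => f (x, w)) y‖ ≤ l * ‖z - y‖ := by
  have hpartial : ∀ w, fderiv ℝ (fun w => f (x, w)) w = (fderiv ℝ f (x, w)).comp (.inr ℝ E F) :=
    fun w => ((hf (x, w)).hasFDerivAt.comp w (hasFDerivAt_prodMk_right x w)).fderiv
  calc ‖fderiv ℝ (fun w => f (x, w)) z - fderiv ℝ (fun w => f (x, w)) y‖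
      = ‖(fderiv ℝ f (x, z) - fderiv ℝ f (x, y)).comp (.inr ℝ E F)‖ := by
        rw [hpartial, hpartial, ContinuousLinearMap.sub_comp]
    _ ≤ ‖fderiv ℝ f (x, z) - fderiv ℝ f (x, y)‖ * ‖ContinuousLinearMap.inr ℝ E F‖ :=
        ContinuousLinearMap.opNorm_comp_le _ _
    _ ≤ ‖fderiv ℝ f (x, z) - fderiv ℝ f (x, y)‖ :=
        mul_le_of_le_one_right (norm_nonneg _) (ContinuousLinearMap.norm_inr_le_one ℝ E F)
    _ ≤ l * ‖z - y‖ := by simpa using hfl (x, z) (x, y)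

theorem stronglyMonotone_fderiv_add_const_mul {φ ψ : F → ℝ} (hφ : Differentiable ℝ φ)
    (hφl : ∀ y z, ‖fderiv ℝ φ z - fderiv ℝ φ y‖ ≤ l * ‖z - y‖) (hψ : Differentiable ℝ ψ)
    (hsc : StrongConvexOn univ μ ψ) (hlam : 0 ≤ lam) :
    StronglyMonotone (lam * μ - l) (fderiv ℝ fun y => φ y + lam * ψ y) := by
  have hsum : (fderiv ℝ fun y => φ y + lam * ψ y) = fderiv ℝ φ + lam • fderiv ℝ ψ :=
    funext fun y => ((hφ y).hasFDerivAt.add ((hψ y).hasFDerivAt.const_mul lam)).fderiv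
  rw [hsum, sub_eq_neg_add]
  exact (StronglyMonotone.of_norm_sub_le hφl).add
    ((stronglyMonotone_fderiv_of_strongConvexOn hsc hψ).const_smul hlam)

theorem eq_of_forall_fderiv_eq_of_forall_le {φ : F → ℝ} (hφ : Differentiable ℝ φ)
    (hconst : ∀ y z, fderiv ℝ φ y = fderiv ℝ φ z) {w : F} (hw : ∀ y, φ w ≤ φ y) (y z : F) :
    φ y = φ z :=
  is_const_of_fderiv_eq_zero hφ
    (fun y => (hconst y w).trans (IsLocalMin.fderiv_eq_zero (.of_forall hw))) y z

theorem mul_sub_pos_or_penalized_eq {φ ψ : F → ℝ} (hμ : 0 < μ) (hlam : 2 * l / μ ≤ lam)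
    (hφ : Differentiable ℝ φ) (hφl : ∀ y z, ‖fderiv ℝ φ z - fderiv ℝ φ y‖ ≤ l * ‖z - y‖)
    {w : F} (hw : ∀ y, φ w + lam * ψ w ≤ φ y + lam * ψ y) :
    (0 ≤ lam ∧ 0 < lam * μ - l) ∨ ∀ y z, φ y + lam * ψ y = φ z + lam * ψ z := by
  rw [div_le_iff₀ hμ] at hlam
  rcases lt_trichotomy l 0 with hl | rfl | hl
  · refine .inr fun y z => ?_
    have hnonneg := (norm_nonneg _).trans (hφl y z)
    have hzy : z - y = 0 := norm_le_zero_iff.1 (nonpos_of_mul_nonneg_right hnonneg hl)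
    rw [sub_eq_zero.1 hzy]
  · have hlam₀ : 0 ≤ lam := nonneg_of_mul_nonneg_left (by simpa using hlam) hμ
    rcases hlam₀.eq_or_lt with rfl | hpos
    · have hconst : ∀ y z, fderiv ℝ φ y = fderiv ℝ φ z := fun y z =>
        sub_eq_zero.1 (norm_le_zero_iff.1 (by simpa using hφl z y))
      simp only [zero_mul, add_zero] at hw ⊢
      exact .inr (eq_of_forall_fderiv_eq_of_forall_le hφ hconst hw)
    · exact .inl ⟨hlam₀, by simpa using mul_pos hpos hμ⟩
  · have hpos : 0 < lam := pos_of_mul_pos_left (by linarith) hμ.le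
    exact .inl ⟨hpos.le, by linarith⟩

theorem hasFDerivAt_penalized_value (hμ : 0 < μ) (hlam : 2 * l / μ ≤ lam) (hf : ContDiff ℝ 1 f)
    (hfl : ∀ x y z, ‖fderiv ℝ (fun w => f (x, w)) z - fderiv ℝ (fun w => f (x, w)) y‖ ≤
      l * ‖z - y‖)
    (hg : ContDiff ℝ 1 g) (hsc : ∀ x, StrongConvexOn univ μ fun y => g (x, y)) {Y : E → F}
    (hY : ∀ x y, f (x, Y x) + lam * g (x, Y x) ≤ f (x, y) + lam * g (x, y)) (x : E) :
    HasFDerivAt (fun x' => f (x', Y x') + lam * g (x', Y x'))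
      (fderiv ℝ (fun x' => f (x', Y x) + lam * g (x', Y x)) x) x := by
  have hfd : Differentiable ℝ f := hf.differentiable one_ne_zero
  have hgd : Differentiable ℝ g := hg.differentiable one_ne_zero
  have hdichotomy := fun x' => mul_sub_pos_or_penalized_eq (ψ := fun y => g (x', y)) hμ hlam
    (hfd.comp (by fun_prop)) (hfl x') (hY x')
  by_cases hpos : 0 ≤ lam ∧ 0 < lam * μ - l
  · exact hasFDerivAt_value_of_stronglyMonotone (h := fun p => f p + lam * g p)
      (hf.add (contDiff_const.mul hg)) hpos.2 (fun x' => stronglyMonotone_fderiv_add_const_mul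
        (hfd.comp (by fun_prop)) (hfl x') (hgd.comp (by fun_prop)) (hsc x') hpos.1) hY x
  · have hval : (fun x' => f (x', Y x') + lam * g (x', Y x')) =
        fun x' => f (x', Y x) + lam * g (x', Y x) :=
      funext fun x' => (hdichotomy x').resolve_left hpos _ _
    have hd : Differentiable ℝ fun x' => f (x', Y x) + lam * g (x', Y x) := by fun_prop
    rw [hval]
    exact (hd x).hasFDerivAt

theorem hasFDerivAt_lagrangian_value (hμ : 0 < μ) (hlam : 2 * l / μ ≤ lam) (hf : ContDiff ℝ 1 f)
    (hfl : ∀ x y z, ‖fderiv ℝ (fun w => f (x, w)) z - fderiv ℝ (fun w => f (x, w)) y‖ ≤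
      l * ‖z - y‖)
    (hg : ContDiff ℝ 1 g) (hsc : ∀ x, StrongConvexOn univ μ fun y => g (x, y))
    {ystar ystarlam : E → F} (hystar : ∀ x y, g (x, ystar x) ≤ g (x, y))
    (hystarlam : ∀ x y, f (x, ystarlam x) + lam * (g (x, ystarlam x) - g (x, ystar x)) ≤
      f (x, y) + lam * (g (x, y) - g (x, ystar x))) (x : E) :
    HasFDerivAt (fun x' => f (x', ystarlam x') + lam * (g (x', ystarlam x') - g (x', ystar x')))
      (fderiv ℝ (fun x' => f (x', ystarlam x)) x +
        lam • (fderiv ℝ (fun x' => g (x', ystarlam x)) x -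
          fderiv ℝ (fun x' => g (x', ystar x)) x)) x := by
  have hfd : Differentiable ℝ f := hf.differentiable one_ne_zero
  have hgd : Differentiable ℝ g := hg.differentiable one_ne_zero
  have hpenalized := hasFDerivAt_penalized_value hμ hlam hf hfl hg hsc (Y := ystarlam)
    (fun x y => by linarith [hystarlam x y]) x
  have hlower := hasFDerivAt_value_of_stronglyMonotone hg hμ (fun x' =>
    stronglyMonotone_fderiv_of_strongConvexOn (hsc x') (hgd.comp (by fun_prop))) hystar x
  rw [fderiv_fun_add (by fun_prop) (by fun_prop), fderiv_const_mul (by fun_prop)] at hpenalized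
  simpa only [mul_sub, smul_sub, add_sub_assoc] using
    hpenalized.fun_sub (hlower.const_mul lam)

end Penalization

theorem lagrangian_value_gradient_general {E F : Type*} [NormedAddCommGroup E]
    [InnerProductSpace ℝ E] [CompleteSpace E] [NormedAddCommGroup F] [NormedSpace ℝ F]
    {f g : E × F → ℝ} {l μ lam : ℝ} (hμ : 0 < μ) (hlam : 2 * l / μ ≤ lam) (hf : ContDiff ℝ 1 f)
    (hfl : ∀ x y z, ‖fderiv ℝ (fun w => f (x, w)) z - fderiv ℝ (fun w => f (x, w)) y‖ ≤
      l * ‖z - y‖)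
    (hg : ContDiff ℝ 1 g) (hsc : ∀ x, StrongConvexOn univ μ fun y => g (x, y))
    {ystar ystarlam : E → F} (hystar : ∀ x y, g (x, ystar x) ≤ g (x, y))
    (hystarlam : ∀ x y, f (x, ystarlam x) + lam * (g (x, ystarlam x) - g (x, ystar x)) ≤
      f (x, y) + lam * (g (x, y) - g (x, ystar x))) (x : E) :
    HasGradientAt
      (fun x' => f (x', ystarlam x') + lam * (g (x', ystarlam x') - g (x', ystar x')))
      (gradient (fun x' => f (x', ystarlam x)) x +
        lam • (gradient (fun x' => g (x', ystarlam x)) x -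
          gradient (fun x' => g (x', ystar x)) x)) x := by
  simpa [gradient] using
    (hasFDerivAt_lagrangian_value hμ hlam hf hfl hg hsc hystar hystarlam x).hasGradientAt

theorem lagrangian_value_gradient
    (dx dy : ℕ)
    (f g : EuclideanSpace ℝ (Fin dx) × EuclideanSpace ℝ (Fin dy) → ℝ)
    (lf1 lg1 μg : ℝ)
    (hμg : 0 < μg)
    (hf : ContDiff ℝ 2 f)
    (hf1 : ∀ p q, ‖fderiv ℝ f p - fderiv ℝ f q‖ ≤ lf1 * ‖p - q‖)
    (hg : ContDiff ℝ 2 g)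
    (hg1 : ∀ p q, ‖fderiv ℝ g p - fderiv ℝ g q‖ ≤ lg1 * ‖p - q‖)
    (hsc : ∀ x, StrongConvexOn univ μg (fun y => g (x, y)))
    (ystar : EuclideanSpace ℝ (Fin dx) → EuclideanSpace ℝ (Fin dy))
    (hystar : ∀ x y, g (x, ystar x) ≤ g (x, y))
    (ystarlam : ℝ → EuclideanSpace ℝ (Fin dx) → EuclideanSpace ℝ (Fin dy))
    (hystarlam : ∀ lam x, 2 * lf1 / μg ≤ lam → ∀ y,
      f (x, ystarlam lam x) + lam * (g (x, ystarlam lam x) - g (x, ystar x)) ≤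
      f (x, y) + lam * (g (x, y) - g (x, ystar x))) :
    ∀ lam : ℝ, 2 * lf1 / μg ≤ lam →
      ∀ x : EuclideanSpace ℝ (Fin dx),
        HasGradientAt
          (fun x' => f (x', ystarlam lam x') + lam * (g (x', ystarlam lam x') - g (x', ystar x')))
          (gradient (fun x' => f (x', ystarlam lam x)) x +
            lam • (gradient (fun x' => g (x', ystarlam lam x)) x -
              gradient (fun x' => g (x', ystar x)) x)) x := by
  exact fun lam hlam => lagrangian_value_gradient_general hμg hlam (hf.of_le one_le_two)
    (norm_fderiv_prodMk_right_sub_le (hf.differentiable two_ne_zero) hf1) (hg.of_le one_le_two)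
    hsc hystar fun x => hystarlam lam x hlam
end
end

section
/- For any x ∈ ℝ^{d_x}, y ∈ ℝ^{d_y}, and λ > 0, the following Hessian-corrected relation between the hyper-gradient and the Lagrangian gradients holds: ‖∇F(x) − ∇_x L_λ(x,y) + [∇²_{xy} g(x, y*(x))]ᵀ [∇²_{yy} g(x, y*(x))]^{-1} ∇_y L_λ(x,y)‖ ≤ 2 (l_{g,1}/μ_g) ‖y − y*(x)‖ (l_{f,1} + λ · min(2 l_{g,1}, l_{g,2} ‖y − y*(x)‖)). -/
open Set
open scoped RealInnerProductSpace

noncomputable section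

/-!
Strong convexity makes `∂_y g (x, ·)` antilipschitz, so the minimizer `y*` is differentiable and
`∇F = ∇ₓf - T ∇_y f` at `(x, y*)`, with `T = ∇²_{xy} g (∇²_{yy} g)⁻¹`. As `∂_y g` vanishes at
`(x, y*)`, the corrected difference of gradients collapses to `T b - a`, where `(a, b)` represents
the single functional
`R = Df(x, y) - Df(x, y*) + λ (Dg(x, y) - Dg(x, y*) - D²g(x, y*)(0, y - y*))`.
Since `‖T‖ ≤ l_{g,1} / μ_g` and `1 ≤ l_{g,1} / μ_g` (unless the `y`-space is trivial, where both
sides vanish), it is at most `2 (l_{g,1} / μ_g) ‖R‖`. The two arguments of the minimum bound the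
Taylor remainder of `Dg`: one uses only that `Dg` is Lipschitz, the other that `D²g` is.
-/

open Filter ContinuousLinearMap
open scoped NNReal Topology Gradient

theorem nonneg_of_forall_norm_sub_le_mul {E F : Type*} [NormedAddCommGroup E] [Nontrivial E]
    [SeminormedAddCommGroup F] {φ : E → F} {C : ℝ} (h : ∀ p q, ‖φ p - φ q‖ ≤ C * ‖p - q‖) :
    0 ≤ C :=
  let ⟨p, q, hpq⟩ := exists_pair_ne E
  nonneg_of_mul_nonneg_left ((norm_nonneg _).trans (h p q)) (norm_sub_pos_iff.2 hpq)

section Antilipschitz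

variable {𝕜 E F G : Type*} [NontriviallyNormedField 𝕜]
  [NormedAddCommGroup E] [NormedSpace 𝕜 E] [NormedAddCommGroup F] [NormedSpace 𝕜 F]
  [NormedAddCommGroup G] [NormedSpace 𝕜 G] {K : ℝ≥0}

theorem antilipschitzWith_of_hasFDerivAt {φ : F → G} {φ' : F →L[𝕜] G} {y : F}
    (hφ : AntilipschitzWith K φ) (hφ' : HasFDerivAt φ φ' y) : AntilipschitzWith K φ' := by
  refine φ'.antilipschitz_of_bound fun v => ?_
  have hslope : Tendsto (fun t : 𝕜 => K * ‖t⁻¹ • (φ (y + t • v) - φ y)‖) (𝓝[≠] 0)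
      (𝓝 (K * ‖φ' v‖)) :=
    (hφ'.hasLineDerivAt v).tendsto_slope_zero.norm.const_mul _
  refine ge_of_tendsto hslope ?_
  filter_upwards [self_mem_nhdsWithin] with t ht
  have hdist : ‖t‖ * ‖v‖ ≤ K * ‖φ (y + t • v) - φ y‖ := by
    simpa [dist_eq_norm, norm_smul] using hφ.le_mul_dist (y + t • v) y
  rw [norm_smul, norm_inv, mul_left_comm, le_inv_mul_iff₀ (norm_pos_iff.2 ht)]
  exact hdist

-- The candidate linearization `c` of `s` leaves a residual `Φ (·, c ·) - k = o(· - x)`, which the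
-- antilipschitz bound turns into a bound on `s - c`.
theorem hasFDerivAt_of_antilipschitzWith_of_eq {Φ : E × F → G} {Φ' : E × F →L[𝕜] G}
    {s : E → F} {A : E →L[𝕜] F} {x : E} {k : G}
    (hΦ : ∀ᶠ x' in 𝓝 x, AntilipschitzWith K fun y => Φ (x', y))
    (hs : ∀ᶠ x' in 𝓝 x, Φ (x', s x') = k) (hΦ' : HasFDerivAt Φ Φ' (x, s x))
    (hA : ∀ u, Φ' (u, A u) = 0) : HasFDerivAt s A x := by
  let c : E → F := fun x' => s x + A (x' - x)
  have hcx : c x = s x := by simp [c]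
  have hc : HasFDerivAt c A x := by
    simpa [c] using (A.hasFDerivAt.comp x ((hasFDerivAt_id x).sub_const x)).const_add (s x)
  have hresidual : HasFDerivAt (fun x' => Φ (x', c x')) (0 : E →L[𝕜] G) x := by
    refine ((hcx ▸ hΦ').comp x ((hasFDerivAt_id x).prodMk hc)).congr_fderiv ?_
    ext u
    exact hA u
  rw [hasFDerivAt_iff_isLittleO] at hresidual ⊢
  refine Asymptotics.IsBigO.trans_isLittleO (.of_bound K ?_) hresidual
  filter_upwards [hΦ, hs] with x' hanti hroot
  have hdist := hanti.le_mul_dist (s x') (c x')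
  rw [dist_comm (Φ _), hroot, ← hs.self_of_nhds, ← hcx] at hdist
  simpa [c, dist_eq_norm, sub_sub] using hdist

end Antilipschitz

section Taylor

variable {E F : Type*} [NormedAddCommGroup E] [NormedSpace ℝ E]
  [NormedAddCommGroup F] [NormedSpace ℝ F]

theorem differentiable_fderiv_of_contDiff_two {φ : E → F} (hφ : ContDiff ℝ 2 φ) :
    Differentiable ℝ (fderiv ℝ φ) :=
  (hφ.fderiv_right (m := 1) le_rfl).differentiable one_ne_zero

theorem norm_sub_sub_fderiv_le_min {φ : E → F} {L M : ℝ≥0} (hφ : Differentiable ℝ φ)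
    (hL : LipschitzWith L φ) (hM : LipschitzWith M (fderiv ℝ φ)) (p q : E) :
    ‖φ q - φ p - fderiv ℝ φ p (q - p)‖ ≤ min (2 * (L : ℝ)) (M * ‖q - p‖) * ‖q - p‖ := by
  rw [min_mul_of_nonneg _ _ (norm_nonneg _)]
  refine le_min ?_ ?_
  · calc ‖φ q - φ p - fderiv ℝ φ p (q - p)‖
        ≤ ‖φ q - φ p‖ + ‖fderiv ℝ φ p (q - p)‖ := norm_sub_le _ _
      _ ≤ L * ‖q - p‖ + L * ‖q - p‖ := by
          gcongr
          · exact hL.norm_sub_le q p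
          · exact (fderiv ℝ φ p).le_of_opNorm_le (norm_fderiv_le_of_lipschitz ℝ hL) _
      _ = 2 * L * ‖q - p‖ := by ring
  · refine (convex_closedBall p ‖q - p‖).norm_image_sub_le_of_norm_fderiv_le'
      (fun z _ => hφ z) (fun z hz => (hM.norm_sub_le z p).trans ?_)
      (Metric.mem_closedBall_self (norm_nonneg _)) (by simp [dist_eq_norm])
    gcongr
    exact mem_closedBall_iff_norm.1 hz

theorem norm_fderiv_sub_add_smul_taylor_remainder_le {f g : E → ℝ} {Lf L M : ℝ≥0}
    (hf : LipschitzWith Lf (fderiv ℝ f)) (hg : Differentiable ℝ (fderiv ℝ g))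
    (hL : LipschitzWith L (fderiv ℝ g)) (hM : LipschitzWith M (fderiv ℝ (fderiv ℝ g)))
    {c : ℝ} (hc : 0 ≤ c) (p q : E) :
    ‖fderiv ℝ f q - fderiv ℝ f p +
        c • (fderiv ℝ g q - fderiv ℝ g p - fderiv ℝ (fderiv ℝ g) p (q - p))‖ ≤
      ‖q - p‖ * (Lf + c * min (2 * (L : ℝ)) (M * ‖q - p‖)) := by
  grw [norm_add_le, norm_smul, Real.norm_of_nonneg hc, hf.norm_sub_le,
    norm_sub_sub_fderiv_le_min hg hL hM]
  exact le_of_eq (by ring)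

end Taylor

section StrongConvexity

variable {F : Type*} [NormedAddCommGroup F] [NormedSpace ℝ F] {h : F → ℝ} {s : Set F} {y z : F}

theorem add_fderiv_add_le_of_uniformConvexOn {ψ : ℝ → ℝ} (hc : UniformConvexOn s ψ h)
    (hy : y ∈ s) (hz : z ∈ s) (hd : DifferentiableAt ℝ h y) :
    h y + fderiv ℝ h y (z - y) + ψ ‖z - y‖ ≤ h z := by
  have hslope := (hd.hasFDerivAt.hasLineDerivAt (z - y)).tendsto_slope_zero_right
  have hbound : Tendsto (fun t : ℝ => h z - h y - (1 - t) * ψ ‖z - y‖)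
      (𝓝[>] 0) (𝓝 (h z - h y - (1 - 0) * ψ ‖z - y‖)) :=
    (Continuous.tendsto (by fun_prop) 0).mono_left nhdsWithin_le_nhds
  have hlimit := le_of_tendsto_of_tendsto hslope hbound (by
    filter_upwards [Ioo_mem_nhdsGT (zero_lt_one' ℝ)] with t ht
    have hconv := hc.2 hy hz (sub_nonneg.2 ht.2.le) ht.1.le (by ring)
    have hseg : (1 - t) • y + t • z = y + t • (z - y) := by module
    rw [hseg, norm_sub_rev] at hconv
    simp only [smul_eq_mul] at hconv ⊢
    rw [inv_mul_le_iff₀ ht.1]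
    linarith)
  linarith

theorem two_mul_le_fderiv_sub_of_uniformConvexOn {ψ : ℝ → ℝ} (hc : UniformConvexOn s ψ h)
    (hy : y ∈ s) (hz : z ∈ s) (hdy : DifferentiableAt ℝ h y) (hdz : DifferentiableAt ℝ h z) :
    2 * ψ ‖z - y‖ ≤ (fderiv ℝ h z - fderiv ℝ h y) (z - y) := by
  have hyz := add_fderiv_add_le_of_uniformConvexOn hc hy hz hdy
  have hzy := add_fderiv_add_le_of_uniformConvexOn hc hz hy hdz
  rw [norm_sub_rev, ← neg_sub z y, map_neg] at hzy
  rw [sub_apply]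
  linarith

theorem antilipschitzWith_fderiv_of_strongConvexOn {m : ℝ≥0} (hm : 0 < m)
    (hc : StrongConvexOn univ m h) (hd : Differentiable ℝ h) :
    AntilipschitzWith m⁻¹ (fderiv ℝ h) := by
  refine .of_le_mul_dist fun z y => ?_
  rw [NNReal.coe_inv, le_inv_mul_iff₀ (NNReal.coe_pos.2 hm), dist_eq_norm, dist_eq_norm]
  rcases (norm_nonneg (z - y)).eq_or_lt with hzero | hpos
  · simp [← hzero]
  · refine le_of_mul_le_mul_right ?_ hpos
    calc m * ‖z - y‖ * ‖z - y‖ = 2 * (m / 2 * ‖z - y‖ ^ 2) := by ring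
      _ ≤ (fderiv ℝ h z - fderiv ℝ h y) (z - y) :=
          two_mul_le_fderiv_sub_of_uniformConvexOn hc (mem_univ y) (mem_univ z) (hd y) (hd z)
      _ ≤ ‖fderiv ℝ h z - fderiv ℝ h y‖ * ‖z - y‖ :=
          (Real.le_norm_self _).trans (le_opNorm _ _)

end StrongConvexity

section PartialDerivatives

variable {E F : Type*} [NormedAddCommGroup E] [NormedSpace ℝ E]
  [NormedAddCommGroup F] [NormedSpace ℝ F] {g : E × F → ℝ} {x : E} {y : F}

theorem fderiv_comp_prodMk_left (hg : DifferentiableAt ℝ g (x, y)) :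
    fderiv ℝ (fun x' => g (x', y)) x = (fderiv ℝ g (x, y)).comp (inl ℝ E F) :=
  (hg.hasFDerivAt.comp x (hasFDerivAt_prodMk_left x y)).fderiv

theorem fderiv_comp_prodMk_right (hg : DifferentiableAt ℝ g (x, y)) :
    fderiv ℝ (fun y' => g (x, y')) y = (fderiv ℝ g (x, y)).comp (inr ℝ E F) :=
  (hg.hasFDerivAt.comp y (hasFDerivAt_prodMk_right x y)).fderiv

theorem fderiv_comp_inr_eq_zero_of_forall_le (hg : DifferentiableAt ℝ g (x, y))
    (hmin : ∀ y', g (x, y) ≤ g (x, y')) : (fderiv ℝ g (x, y)).comp (inr ℝ E F) = 0 := by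
  rw [← fderiv_comp_prodMk_right hg]
  exact IsLocalMin.fderiv_eq_zero (.of_forall hmin)

theorem hasFDerivAt_fderiv_comp_inr {p : E × F} (hg : DifferentiableAt ℝ (fderiv ℝ g) p) :
    HasFDerivAt (fun q => (fderiv ℝ g q).comp (inr ℝ E F))
      (((compL ℝ F (E × F) ℝ).flip (inr ℝ E F)).comp (fderiv ℝ (fderiv ℝ g) p)) p :=
  ((compL ℝ F (E × F) ℝ).flip (inr ℝ E F)).hasFDerivAt.comp p hg.hasFDerivAt

theorem antilipschitzWith_fderiv_comp_inr {m : ℝ≥0} (hm : 0 < m) (hg : Differentiable ℝ g)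
    (hsc : StrongConvexOn univ m fun y => g (x, y)) :
    AntilipschitzWith m⁻¹ fun y => (fderiv ℝ g (x, y)).comp (inr ℝ E F) := by
  simp only [← fderiv_comp_prodMk_right (hg _)]
  exact antilipschitzWith_fderiv_of_strongConvexOn hm hsc (by fun_prop)

theorem norm_le_mul_norm_fderiv_fderiv_comp_inr {m : ℝ≥0} (hm : 0 < m) (hg : Differentiable ℝ g)
    (hg' : DifferentiableAt ℝ (fderiv ℝ g) (x, y))
    (hsc : StrongConvexOn univ m fun y => g (x, y)) (v : F) :
    ‖v‖ ≤ (m⁻¹ : ℝ≥0) * ‖(fderiv ℝ (fderiv ℝ g) (x, y) (0, v)).comp (inr ℝ E F)‖ :=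
  bound_of_antilipschitz _ (antilipschitzWith_of_hasFDerivAt
    (antilipschitzWith_fderiv_comp_inr hm hg hsc)
    ((hasFDerivAt_fderiv_comp_inr hg').comp y (hasFDerivAt_prodMk_right x y))) v

theorem hasFDerivAt_argmin_of_strongConvexOn {m : ℝ≥0} (hm : 0 < m) (hg : Differentiable ℝ g)
    {ystar : E → F} (hg' : DifferentiableAt ℝ (fderiv ℝ g) (x, ystar x))
    (hsc : ∀ x, StrongConvexOn univ m fun y => g (x, y))
    (hystar : ∀ x y, g (x, ystar x) ≤ g (x, y)) {A : E →L[ℝ] F}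
    (hA : ∀ u w, fderiv ℝ (fderiv ℝ g) (x, ystar x) (u, A u) (0, w) = 0) :
    HasFDerivAt ystar A x :=
  hasFDerivAt_of_antilipschitzWith_of_eq
    (.of_forall fun x' => antilipschitzWith_fderiv_comp_inr hm hg (hsc x'))
    (.of_forall fun x' => fderiv_comp_inr_eq_zero_of_forall_le (hg _) (hystar x'))
    (hasFDerivAt_fderiv_comp_inr hg')
    fun u => by ext w; exact hA u w

end PartialDerivatives

section Riesz

variable {E F P : Type*} [NormedAddCommGroup E] [InnerProductSpace ℝ E]
  [NormedAddCommGroup F] [NormedSpace ℝ F] [NormedAddCommGroup P] [NormedSpace ℝ P]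

theorem norm_le_opNorm_of_inner_eq {a : E} {R : P →L[ℝ] ℝ} {ι : E →L[ℝ] P} (hι : ‖ι‖ ≤ 1)
    (h : ∀ u, ⟪a, u⟫ = R (ι u)) : ‖a‖ ≤ ‖R‖ := by
  have hcomp : innerSL ℝ a = R.comp ι := ContinuousLinearMap.ext h
  calc ‖a‖ = ‖R.comp ι‖ := by rw [← hcomp, innerSL_apply_norm]
    _ ≤ ‖R‖ * ‖ι‖ := R.opNorm_comp_le ι
    _ ≤ ‖R‖ := mul_le_of_le_one_right (norm_nonneg R) hι

theorem opNorm_le_opNorm_of_inner_eq {H : F →L[ℝ] E} {B : P →L[ℝ] P →L[ℝ] ℝ}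
    {ι : E →L[ℝ] P} {κ : F →L[ℝ] P} (hι : ‖ι‖ ≤ 1) (hκ : ‖κ‖ ≤ 1)
    (h : ∀ v u, ⟪H v, u⟫ = B (κ v) (ι u)) : ‖H‖ ≤ ‖B‖ := by
  refine H.opNorm_le_bound (norm_nonneg B) fun v => ?_
  calc ‖H v‖ ≤ ‖B (κ v)‖ := norm_le_opNorm_of_inner_eq hι (h v)
    _ ≤ ‖B‖ * ‖κ v‖ := B.le_opNorm _
    _ ≤ ‖B‖ * ‖v‖ := by
        gcongr
        simpa using κ.le_of_opNorm_le hκ v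

end Riesz

section HyperGradient

variable {E F : Type*} [NormedAddCommGroup E] [NormedAddCommGroup F]
  {f g : E × F → ℝ} {x : E} {y : F}

theorem inner_gradient_prodMk_left [InnerProductSpace ℝ E] [CompleteSpace E] [NormedSpace ℝ F]
    (hf : DifferentiableAt ℝ f (x, y)) (u : E) :
    ⟪∇ (fun x' => f (x', y)) x, u⟫ = fderiv ℝ f (x, y) (u, 0) := by
  rw [inner_gradient_left, fderiv_comp_prodMk_left hf, comp_apply, inl_apply]

theorem inner_gradient_prodMk_right [NormedSpace ℝ E] [InnerProductSpace ℝ F] [CompleteSpace F]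
    (hf : DifferentiableAt ℝ f (x, y)) (w : F) :
    ⟪∇ (fun y' => f (x, y')) y, w⟫ = fderiv ℝ f (x, y) (0, w) := by
  rw [inner_gradient_left, fderiv_comp_prodMk_right hf, comp_apply, inr_apply]

theorem antilipschitzWith_of_inner_eq_fderiv_fderiv [NormedSpace ℝ E]
    [InnerProductSpace ℝ F] {m : ℝ≥0} (hm : 0 < m) (hg : ContDiff ℝ 2 g)
    (hsc : StrongConvexOn univ m fun y => g (x, y)) {Hyy : F →L[ℝ] F}
    (hHyy : ∀ v w, ⟪Hyy v, w⟫ = fderiv ℝ (fderiv ℝ g) (x, y) (0, v) (0, w)) :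
    AntilipschitzWith m⁻¹ Hyy := by
  refine Hyy.antilipschitz_of_bound fun v => ?_
  have hriesz : innerSL ℝ (Hyy v) =
      (fderiv ℝ (fderiv ℝ g) (x, y) (0, v)).comp (inr ℝ E F) := ContinuousLinearMap.ext (hHyy v)
  rw [← innerSL_apply_norm ℝ (Hyy v), hriesz]
  exact norm_le_mul_norm_fderiv_fderiv_comp_inr hm (hg.differentiable two_ne_zero)
    (differentiable_fderiv_of_contDiff_two hg _) hsc v

variable [InnerProductSpace ℝ E] [CompleteSpace E] [InnerProductSpace ℝ F] [CompleteSpace F]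

theorem gradient_comp_graph {s : E → F} {A : E →L[ℝ] F} (hs : HasFDerivAt s A x)
    (hf : DifferentiableAt ℝ f (x, s x)) :
    ∇ (fun x' => f (x', s x')) x =
      ∇ (fun x' => f (x', s x)) x + adjoint A (∇ (fun y' => f (x, y')) (s x)) := by
  refine ext_inner_right ℝ fun u => ?_
  have hcomp : HasFDerivAt (fun x' => f (x', s x'))
      ((fderiv ℝ f (x, s x)).comp ((ContinuousLinearMap.id ℝ E).prod A)) x :=
    hf.hasFDerivAt.comp x ((hasFDerivAt_id x).prodMk hs)
  rw [inner_gradient_left, hcomp.fderiv, inner_add_left, adjoint_inner_left,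
    inner_gradient_prodMk_left hf, inner_gradient_prodMk_right hf, ← map_add]
  simp

theorem gradient_argmin_comp {m : ℝ≥0} (hm : 0 < m) {ystar : E → F}
    (hf : DifferentiableAt ℝ f (x, ystar x)) (hg : ContDiff ℝ 2 g)
    (hsc : ∀ x, StrongConvexOn univ m fun y => g (x, y))
    (hystar : ∀ x y, g (x, ystar x) ≤ g (x, y)) {Hyy : F ≃L[ℝ] F} {Hxy : F →L[ℝ] E}
    (hHyy : ∀ v w, ⟪Hyy v, w⟫ = fderiv ℝ (fderiv ℝ g) (x, ystar x) (0, v) (0, w))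
    (hHxy : ∀ v u, ⟪Hxy v, u⟫ = fderiv ℝ (fderiv ℝ g) (x, ystar x) (u, 0) (0, v)) :
    ∇ (fun x' => f (x', ystar x')) x =
      ∇ (fun x' => f (x', ystar x)) x - Hxy (Hyy.symm (∇ (fun y' => f (x, y')) (ystar x))) := by
  have hsymm : IsSymmSndFDerivAt ℝ g (x, ystar x) := hg.contDiffAt.isSymmSndFDerivAt (by simp)
  let A : E →L[ℝ] F := -adjoint (Hxy.comp (Hyy.symm : F →L[ℝ] F))
  have hA : ∀ u w, fderiv ℝ (fderiv ℝ g) (x, ystar x) (u, A u) (0, w) = 0 := fun u w => by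
    have hyyA : fderiv ℝ (fderiv ℝ g) (x, ystar x) (0, A u) (0, w) = -⟪Hxy w, u⟫ := by
      rw [hsymm.eq, ← hHyy, real_inner_comm]
      simp [A, adjoint_inner_left, real_inner_comm]
    rw [← Prod.fst_add_snd (u, A u), map_add, add_apply, hyyA, hHxy, add_neg_cancel]
  rw [gradient_comp_graph (hasFDerivAt_argmin_of_strongConvexOn hm
    (hg.differentiable two_ne_zero)
    (differentiable_fderiv_of_contDiff_two hg _) hsc hystar hA) hf]
  simp [A, sub_eq_add_neg]

end HyperGradient

section CorrectedGradient

set_option maxSynthPendingDepth 3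

variable {E F : Type*} [NormedAddCommGroup E] [InnerProductSpace ℝ E]
  [NormedAddCommGroup F] [InnerProductSpace ℝ F]

theorem norm_apply_symm_sub_le [Nontrivial F] {m : ℝ≥0} {B : E × F →L[ℝ] E × F →L[ℝ] ℝ}
    {Hyy : F ≃L[ℝ] F} {Hxy : F →L[ℝ] E} (hHyy : ∀ v w, ⟪Hyy v, w⟫ = B (0, v) (0, w))
    (hHxy : ∀ v u, ⟪Hxy v, u⟫ = B (u, 0) (0, v)) (hm : AntilipschitzWith m⁻¹ Hyy)
    {R : E × F →L[ℝ] ℝ} {a : E} {b : F} (ha : ∀ u, ⟪a, u⟫ = R (u, 0))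
    (hb : ∀ w, ⟪b, w⟫ = R (0, w)) : ‖Hxy (Hyy.symm b) - a‖ ≤ 2 * (‖B‖ / m) * ‖R‖ := by
  have hHyy_le : ‖(Hyy : F →L[ℝ] F)‖ ≤ ‖B‖ :=
    opNorm_le_opNorm_of_inner_eq (norm_inr_le_one ℝ E F) (norm_inr_le_one ℝ E F) hHyy
  have hHxy_le : ‖Hxy‖ ≤ ‖B‖ := by
    rw [← opNorm_flip B]
    exact opNorm_le_opNorm_of_inner_eq (norm_inl_le_one ℝ E F) (norm_inr_le_one ℝ E F) hHxy
  have hsymm_le : ‖(Hyy.symm : F →L[ℝ] F)‖ ≤ (m : ℝ)⁻¹ :=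
    opNorm_le_of_lipschitz (hm.to_rightInverse Hyy.rightInverse_symm)
  have hone_le : 1 ≤ ‖B‖ / m :=
    Hyy.one_le_norm_mul_norm_symm.trans <|
      mul_le_mul hHyy_le hsymm_le (by positivity) (by positivity)
  have ha_le : ‖a‖ ≤ ‖R‖ := norm_le_opNorm_of_inner_eq (norm_inl_le_one ℝ E F) ha
  have hb_le : ‖b‖ ≤ ‖R‖ := norm_le_opNorm_of_inner_eq (norm_inr_le_one ℝ E F) hb
  calc ‖Hxy (Hyy.symm b) - a‖ ≤ ‖Hxy (Hyy.symm b)‖ + ‖a‖ := norm_sub_le _ _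
    _ ≤ ‖B‖ * ((m : ℝ)⁻¹ * ‖R‖) + ‖B‖ / m * ‖R‖ := by
        gcongr
        · exact Hxy.le_of_opNorm_le_of_le hHxy_le
            ((Hyy.symm : F →L[ℝ] F).le_of_opNorm_le_of_le hsymm_le hb_le)
        · exact ha_le.trans (le_mul_of_one_le_left (norm_nonneg R) hone_le)
    _ = 2 * (‖B‖ / m) * ‖R‖ := by ring

theorem norm_corrected_gradient_le [CompleteSpace E] [CompleteSpace F] [Nontrivial F]
    {f g : E × F → ℝ} {Lf L M m : ℝ≥0} {x : E} {y₀ : F}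
    (hf : Differentiable ℝ f) (hf' : LipschitzWith Lf (fderiv ℝ f)) (hg : ContDiff ℝ 2 g)
    (hL : LipschitzWith L (fderiv ℝ g)) (hM : LipschitzWith M (fderiv ℝ (fderiv ℝ g)))
    (hgy : (fderiv ℝ g (x, y₀)).comp (inr ℝ E F) = 0) (y : F) {c : ℝ} (hc : 0 ≤ c)
    {Hyy : F ≃L[ℝ] F} {Hxy : F →L[ℝ] E}
    (hHyy : ∀ v w, ⟪Hyy v, w⟫ = fderiv ℝ (fderiv ℝ g) (x, y₀) (0, v) (0, w))
    (hHxy : ∀ v u, ⟪Hxy v, u⟫ = fderiv ℝ (fderiv ℝ g) (x, y₀) (u, 0) (0, v))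
    (hm : AntilipschitzWith m⁻¹ Hyy) :
    ‖∇ (fun x' => f (x', y₀)) x - Hxy (Hyy.symm (∇ (fun y' => f (x, y')) y₀)) -
        (∇ (fun x' => f (x', y)) x +
          c • (∇ (fun x' => g (x', y)) x - ∇ (fun x' => g (x', y₀)) x)) +
        Hxy (Hyy.symm (∇ (fun y' => f (x, y')) y + c • ∇ (fun y' => g (x, y')) y))‖ ≤
      2 * (L / m) * ‖y - y₀‖ * (Lf + c * min (2 * (L : ℝ)) (M * ‖y - y₀‖)) := by
  have hgd : Differentiable ℝ g := hg.differentiable two_ne_zero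
  have hsymm : IsSymmSndFDerivAt ℝ g (x, y₀) := hg.contDiffAt.isSymmSndFDerivAt (by simp)
  set R := fderiv ℝ f (x, y) - fderiv ℝ f (x, y₀) + c • (fderiv ℝ g (x, y) -
    fderiv ℝ g (x, y₀) - fderiv ℝ (fderiv ℝ g) (x, y₀) (0, y - y₀)) with hR
  set a := ∇ (fun x' => f (x', y)) x - ∇ (fun x' => f (x', y₀)) x +
    c • (∇ (fun x' => g (x', y)) x - ∇ (fun x' => g (x', y₀)) x - Hxy (y - y₀)) with ha
  set b := ∇ (fun y' => f (x, y')) y - ∇ (fun y' => f (x, y')) y₀ +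
    c • (∇ (fun y' => g (x, y')) y - Hyy (y - y₀)) with hb
  have haR : ∀ u, ⟪a, u⟫ = R (u, 0) := fun u => by
    simp only [ha, hR, inner_add_left, inner_sub_left, real_inner_smul_left, add_apply, sub_apply,
      smul_apply, smul_eq_mul, inner_gradient_prodMk_left (hf _),
      inner_gradient_prodMk_left (hgd _), hHxy, hsymm.eq (u, 0)]
  have hbR : ∀ w, ⟪b, w⟫ = R (0, w) := fun w => by
    have hgw : fderiv ℝ g (x, y₀) (0, w) = 0 := DFunLike.congr_fun hgy w
    simp only [hb, hR, inner_add_left, inner_sub_left, real_inner_smul_left, add_apply, sub_apply,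
      smul_apply, smul_eq_mul, inner_gradient_prodMk_right (hf _),
      inner_gradient_prodMk_right (hgd _), hHyy, hgw, sub_zero]
  have hR_le : ‖R‖ ≤ ‖y - y₀‖ * (Lf + c * min (2 * (L : ℝ)) (M * ‖y - y₀‖)) := by
    simpa [hR] using norm_fderiv_sub_add_smul_taylor_remainder_le hf'
      (differentiable_fderiv_of_contDiff_two hg) hL hM hc (x, y₀) (x, y)
  calc _ = ‖Hxy (Hyy.symm b) - a‖ := by
        simp only [ha, hb, map_add, map_sub, map_smul, Hyy.symm_apply_apply]
        congr 1
        module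
    _ ≤ 2 * (‖fderiv ℝ (fderiv ℝ g) (x, y₀)‖ / m) * ‖R‖ :=
        norm_apply_symm_sub_le hHyy hHxy hm haR hbR
    _ ≤ 2 * (L / m) * (‖y - y₀‖ * (Lf + c * min (2 * (L : ℝ)) (M * ‖y - y₀‖))) := by
        gcongr
        exact norm_fderiv_le_of_lipschitz ℝ hL
    _ = _ := by rw [mul_assoc _ ‖y - y₀‖]

theorem hessian_corrected_gradient_relation_general {E F : Type*}
    [NormedAddCommGroup E] [InnerProductSpace ℝ E] [CompleteSpace E]
    [NormedAddCommGroup F] [InnerProductSpace ℝ F] [CompleteSpace F]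
    {f g : E × F → ℝ} {lf1 lg1 lg2 μg : ℝ} (hμg : 0 < μg) (hf : Differentiable ℝ f)
    (hf1 : ∀ p q, ‖fderiv ℝ f p - fderiv ℝ f q‖ ≤ lf1 * ‖p - q‖)
    (hg : ContDiff ℝ 2 g)
    (hg1 : ∀ p q, ‖fderiv ℝ g p - fderiv ℝ g q‖ ≤ lg1 * ‖p - q‖)
    (hg2 : ∀ p q, ‖fderiv ℝ (fderiv ℝ g) p - fderiv ℝ (fderiv ℝ g) q‖ ≤ lg2 * ‖p - q‖)
    (hsc : ∀ x, StrongConvexOn univ μg fun y => g (x, y))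
    {ystar : E → F} (hystar : ∀ x y, g (x, ystar x) ≤ g (x, y))
    (x : E) (y : F) {lam : ℝ} (hlam : 0 ≤ lam) {Hyy : F ≃L[ℝ] F} {Hxy : F →L[ℝ] E}
    (hHyy : ∀ v w, ⟪Hyy v, w⟫ = fderiv ℝ (fderiv ℝ g) (x, ystar x) (0, v) (0, w))
    (hHxy : ∀ v u, ⟪Hxy v, u⟫ = fderiv ℝ (fderiv ℝ g) (x, ystar x) (u, 0) (0, v)) :
    ‖∇ (fun x' => f (x', ystar x')) x -
        (∇ (fun x' => f (x', y)) x +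
          lam • (∇ (fun x' => g (x', y)) x - ∇ (fun x' => g (x', ystar x)) x)) +
        Hxy (Hyy.symm (∇ (fun y' => f (x, y')) y + lam • ∇ (fun y' => g (x, y')) y))‖ ≤
      2 * (lg1 / μg) * ‖y - ystar x‖ *
        (lf1 + lam * min (2 * lg1) (lg2 * ‖y - ystar x‖)) := by
  lift μg to ℝ≥0 using hμg.le
  rw [NNReal.coe_pos] at hμg
  have hgy := fderiv_comp_inr_eq_zero_of_forall_le (hg.differentiable two_ne_zero _) (hystar x)
  rw [gradient_argmin_comp hμg (hf _) hg hsc hystar hHyy hHxy]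
  rcases subsingleton_or_nontrivial F with hF | hF
  · simp [Subsingleton.elim y (ystar x), Subsingleton.eq_zero (Hyy.symm _)]
  lift lf1 to ℝ≥0 using nonneg_of_forall_norm_sub_le_mul hf1
  lift lg1 to ℝ≥0 using nonneg_of_forall_norm_sub_le_mul hg1
  lift lg2 to ℝ≥0 using nonneg_of_forall_norm_sub_le_mul hg2
  exact norm_corrected_gradient_le hf (lipschitzWith_iff_norm_sub_le.2 hf1) hg
    (lipschitzWith_iff_norm_sub_le.2 hg1) (lipschitzWith_iff_norm_sub_le.2 hg2) hgy y hlam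
    hHyy hHxy (antilipschitzWith_of_inner_eq_fderiv_fderiv (Hyy := (Hyy : F →L[ℝ] F)) hμg hg
      (hsc x) hHyy)

end CorrectedGradient

theorem hessian_corrected_gradient_relation
    (dx dy : ℕ)
    (f g : EuclideanSpace ℝ (Fin dx) × EuclideanSpace ℝ (Fin dy) → ℝ)
    (lf0 lf1 lg1 lg2 μg : ℝ)
    (hμg : 0 < μg)
    (hf : ContDiff ℝ 1 f)
    (hf1 : ∀ p q, ‖fderiv ℝ f p - fderiv ℝ f q‖ ≤ lf1 * ‖p - q‖)
    (hg : ContDiff ℝ 2 g)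
    (hg1 : ∀ p q, ‖fderiv ℝ g p - fderiv ℝ g q‖ ≤ lg1 * ‖p - q‖)
    (hg2 : ∀ p q, ‖fderiv ℝ (fderiv ℝ g) p - fderiv ℝ (fderiv ℝ g) q‖ ≤ lg2 * ‖p - q‖)
    (hfy0 : ∀ x y, ‖gradient (fun y' => f (x, y')) y‖ ≤ lf0)
    (hsc : ∀ x, StrongConvexOn univ μg (fun y => g (x, y)))
    (ystar : EuclideanSpace ℝ (Fin dx) → EuclideanSpace ℝ (Fin dy))
    (hystar : ∀ x y, g (x, ystar x) ≤ g (x, y)) :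
    ∀ (x : EuclideanSpace ℝ (Fin dx)) (y : EuclideanSpace ℝ (Fin dy)) (lam : ℝ), 0 < lam →
    ∀ (Hyy : EuclideanSpace ℝ (Fin dy) →L[ℝ] EuclideanSpace ℝ (Fin dy))
      (Hxy : EuclideanSpace ℝ (Fin dy) →L[ℝ] EuclideanSpace ℝ (Fin dx))
      (Hinv : EuclideanSpace ℝ (Fin dy) →L[ℝ] EuclideanSpace ℝ (Fin dy)),
      (∀ v w : EuclideanSpace ℝ (Fin dy),
        ⟪Hyy v, w⟫ = fderiv ℝ (fderiv ℝ g) (x, ystar x) (0, v) (0, w)) →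
      (∀ (v : EuclideanSpace ℝ (Fin dy)) (u : EuclideanSpace ℝ (Fin dx)),
        ⟪Hxy v, u⟫ = fderiv ℝ (fderiv ℝ g) (x, ystar x) (u, 0) (0, v)) →
      Hyy.comp Hinv = ContinuousLinearMap.id ℝ (EuclideanSpace ℝ (Fin dy)) →
      Hinv.comp Hyy = ContinuousLinearMap.id ℝ (EuclideanSpace ℝ (Fin dy)) →
      ‖gradient (fun x' => f (x', ystar x')) x -
          (gradient (fun x' => f (x', y)) x +
            lam • (gradient (fun x' => g (x', y)) x - gradient (fun x' => g (x', ystar x)) x)) +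
          Hxy (Hinv (gradient (fun y' => f (x, y')) y +
            lam • gradient (fun y' => g (x, y')) y))‖ ≤
        2 * (lg1 / μg) * ‖y - ystar x‖ *
          (lf1 + lam * min (2 * lg1) (lg2 * ‖y - ystar x‖)) :=
  fun x y _ hlam Hyy _ Hinv hHyy hHxy hright hleft =>
    hessian_corrected_gradient_relation_general hμg (hf.differentiable one_ne_zero) hf1 hg hg1 hg2
      hsc hystar x y hlam.le
      (Hyy := .equivOfInverse Hyy Hinv (DFunLike.congr_fun hleft) (DFunLike.congr_fun hright))
      hHyy hHxy
end
end

section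
/- One stochastic gradient step on a strongly convex function contracts in expectation: if γ l ≤ 1/4, then E[‖z − γ h − y*‖²] ≤ (1 − 3 μ γ/4) ‖z − y*‖² + γ² σ². -/
open Set MeasureTheory

noncomputable section

/-!
Replacing `h` by its mean `∇G(z)` costs exactly `γ²` times the variance of `h`, so it suffices to
bound the deterministic step `z⁺ = z - γ ∇G(z)`. Strong convexity at `z` bounds the cross term of
`‖z⁺ - y*‖²` by `-2γ (G z - G y*) - μγ ‖z - y*‖²`, and for `γ l ≤ 1` the quadratic upper bound
given by the Lipschitz gradient yields `γ² ‖∇G(z)‖² ≤ 2γ (G z - G z⁺)`. Their sum leaves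
`2γ (G y* - G z⁺) ≤ 0`, and the contraction factor is `1 - μγ`.
-/

section NormedSpace

variable {E F : Type*} [NormedAddCommGroup E] [NormedSpace ℝ E]
  [NormedAddCommGroup F] [NormedSpace ℝ F]

theorem add_fderiv_le_of_convexOn {s : Set E} {f : E → ℝ} {f' : E →L[ℝ] ℝ} {x y : E}
    (hf : ConvexOn ℝ s f) (hx : x ∈ s) (hy : y ∈ s) (hf' : HasFDerivWithinAt f f' s x) :
    f x + f' (y - x) ≤ f y := by
  let line : ℝ →ᵃ[ℝ] E := AffineMap.lineMap x y
  have hline₀ : line 0 = x := AffineMap.lineMap_apply_zero x y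
  have hline₁ : line 1 = y := AffineMap.lineMap_apply_one x y
  have hderiv : HasDerivWithinAt (f ∘ line) (f' (y - x)) (line ⁻¹' s) 0 := by
    refine HasFDerivWithinAt.comp_hasDerivWithinAt (t := s) 0 ?_
      AffineMap.hasDerivWithinAt_lineMap (mapsTo_preimage line s)
    rwa [hline₀]
  have hslope := (hf.comp_affineMap line).le_slope_of_hasDerivWithinAt
    (by simpa [hline₀] using hx) (by simpa [hline₁] using hy) zero_lt_one hderiv
  simp only [slope_def_field, Function.comp_apply, hline₀, hline₁, sub_zero, div_one] at hslope
  linarith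

theorem norm_sub_sub_fderiv_le {f : E → F} {f' : E → E →L[ℝ] F} {l : ℝ} {x : E}
    (hf : ∀ a, HasFDerivAt f (f' a) a) (hlip : ∀ a, ‖f' a - f' x‖ ≤ l * ‖a - x‖) (y : E) :
    ‖f y - f x - f' x (y - x)‖ ≤ l / 2 * ‖y - x‖ ^ 2 := by
  set v := y - x with hv
  let remainder : ℝ → F := fun t => f (x + t • v) - f x - t • f' x v
  have hremainder (t : ℝ) : HasDerivAt remainder ((f' (x + t • v) - f' x) v) t := by
    have hline : HasDerivAt (fun t : ℝ => x + t • v) v t := by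
      simpa using ((hasDerivAt_id t).smul_const v).const_add x
    have hsmul : HasDerivAt (fun t : ℝ => t • f' x v) (f' x v) t := by
      simpa using (hasDerivAt_id t).smul_const (f' x v)
    exact (((hf _).comp_hasDerivAt t hline).sub_const (f x)).sub hsmul
  have hbound (t : ℝ) :
      HasDerivAt (fun t : ℝ => l / 2 * ‖v‖ ^ 2 * t ^ 2) (l * ‖v‖ ^ 2 * t) t := by
    refine ((hasDerivAt_pow 2 t).const_mul (l / 2 * ‖v‖ ^ 2)).congr_deriv ?_
    simp only [Nat.cast_ofNat, Nat.add_one_sub_one, pow_one]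
    ring
  have hderiv_le (t : ℝ) (ht : 0 ≤ t) : ‖(f' (x + t • v) - f' x) v‖ ≤ l * ‖v‖ ^ 2 * t :=
    calc ‖(f' (x + t • v) - f' x) v‖ ≤ ‖f' (x + t • v) - f' x‖ * ‖v‖ :=
          ContinuousLinearMap.le_opNorm _ _
      _ ≤ l * ‖x + t • v - x‖ * ‖v‖ := by gcongr; exact hlip _
      _ = l * ‖v‖ ^ 2 * t := by
        rw [add_sub_cancel_left, norm_smul, Real.norm_of_nonneg ht]
        ring
  have hle := image_norm_le_of_norm_deriv_right_le_deriv_boundary (a := 0) (b := 1)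
    (fun t _ => (hremainder t).continuousAt.continuousWithinAt)
    (fun t _ => (hremainder t).hasDerivWithinAt) (by simp [remainder]) hbound
    (fun t ht => hderiv_le t ht.1) (right_mem_Icc.2 zero_le_one)
  simpa [remainder, hv] using hle

end NormedSpace

section InnerProductSpace

variable {E : Type*} [NormedAddCommGroup E] [InnerProductSpace ℝ E] [CompleteSpace E]

theorem add_inner_gradient_add_le_of_strongConvexOn {s : Set E} {m : ℝ} {f : E → ℝ}
    {f' x y : E} (hf : StrongConvexOn s m f) (hx : x ∈ s) (hy : y ∈ s)
    (hf' : HasGradientWithinAt f f' s x) :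
    f x + inner ℝ f' (y - x) + m / 2 * ‖y - x‖ ^ 2 ≤ f y := by
  have hsq := ((hasFDerivAt_id x).norm_sq.const_mul (m / 2)).hasFDerivWithinAt (s := s)
  have hconv := add_fderiv_le_of_convexOn (strongConvexOn_iff_convex.1 hf) hx hy
    (hf'.hasFDerivWithinAt.sub hsq)
  have hnorm : ‖y - x‖ ^ 2 = ‖y‖ ^ 2 - ‖x‖ ^ 2 - 2 * inner ℝ x (y - x) := by
    rw [norm_sub_sq_real, inner_sub_right, real_inner_self_eq_norm_sq, real_inner_comm]
    ring
  simp only [id_eq, ContinuousLinearMap.comp_id, sub_apply, smul_apply, coe_innerSL_apply,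
    InnerProductSpace.toDual_apply_apply, nsmul_eq_mul, Nat.cast_ofNat, smul_eq_mul] at hconv
  rw [hnorm]
  linarith

section GradientStep

variable {f : E → ℝ} {f' : E → E} {l γ : ℝ}

theorem apply_le_add_inner_gradient_add_norm_sq {x : E} (hf : ∀ a, HasGradientAt f (f' a) a)
    (hlip : ∀ a, ‖f' a - f' x‖ ≤ l * ‖a - x‖) (y : E) :
    f y ≤ f x + inner ℝ (f' x) (y - x) + l / 2 * ‖y - x‖ ^ 2 := by
  have hremainder := norm_sub_sub_fderiv_le (fun a => (hf a).hasFDerivAt)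
    (fun a => by simpa only [← map_sub, LinearIsometryEquiv.norm_map] using hlip a) y
  rw [InnerProductSpace.toDual_apply_apply] at hremainder
  linarith [(Real.le_norm_self _).trans hremainder]

theorem apply_sub_smul_gradient_le {x : E} (hf : ∀ a, HasGradientAt f (f' a) a)
    (hlip : ∀ a, ‖f' a - f' x‖ ≤ l * ‖a - x‖) (hγ : 0 ≤ γ) (hγl : γ * l ≤ 1) :
    f (x - γ • f' x) ≤ f x - γ / 2 * ‖f' x‖ ^ 2 :=
  calc f (x - γ • f' x)
      ≤ f x + inner ℝ (f' x) (x - γ • f' x - x) + l / 2 * ‖x - γ • f' x - x‖ ^ 2 :=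
        apply_le_add_inner_gradient_add_norm_sq hf hlip _
    _ = f x - γ * ‖f' x‖ ^ 2 + γ * l * (γ / 2 * ‖f' x‖ ^ 2) := by
        rw [sub_sub_cancel_left, inner_neg_right, real_inner_smul_right,
          real_inner_self_eq_norm_sq, norm_neg, norm_smul, Real.norm_of_nonneg hγ]
        ring
    _ ≤ f x - γ * ‖f' x‖ ^ 2 + 1 * (γ / 2 * ‖f' x‖ ^ 2) := by gcongr
    _ = f x - γ / 2 * ‖f' x‖ ^ 2 := by ring

theorem norm_sub_smul_gradient_sub_sq_le {m : ℝ} {x : E} (hsc : StrongConvexOn univ m f)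
    (hf : ∀ a, HasGradientAt f (f' a) a) (hlip : ∀ a, ‖f' a - f' x‖ ≤ l * ‖a - x‖)
    (hγ : 0 ≤ γ) (hγl : γ * l ≤ 1) (y : E) :
    ‖x - γ • f' x - y‖ ^ 2 ≤
      (1 - m * γ) * ‖x - y‖ ^ 2 + 2 * γ * (f y - f (x - γ • f' x)) := by
  have hdescent := apply_sub_smul_gradient_le hf hlip hγ hγl
  have hlower : f x - inner ℝ (x - y) (f' x) + m / 2 * ‖x - y‖ ^ 2 ≤ f y := by
    have := add_inner_gradient_add_le_of_strongConvexOn hsc (mem_univ x) (mem_univ y)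
      (hasGradientWithinAt_univ.2 (hf x))
    rwa [← neg_sub x y, inner_neg_right, norm_neg, real_inner_comm, ← sub_eq_add_neg] at this
  have hexpand : ‖x - γ • f' x - y‖ ^ 2 =
      ‖x - y‖ ^ 2 - 2 * γ * inner ℝ (x - y) (f' x) + γ ^ 2 * ‖f' x‖ ^ 2 := by
    rw [sub_right_comm, norm_sub_sq_real, real_inner_smul_right, norm_smul, mul_pow,
      Real.norm_of_nonneg hγ]
    ring
  linarith [mul_le_mul_of_nonneg_left (add_le_add hdescent hlower) hγ]

end GradientStep

theorem integral_norm_sub_sq_eq_add {Ω : Type*} [MeasurableSpace Ω] {P : Measure Ω}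
    [IsProbabilityMeasure P] {X : Ω → E} (hX : Integrable X P)
    (hvar : Integrable (fun ω => ‖X ω - ∫ ω', X ω' ∂P‖ ^ 2) P) (a : E) :
    ∫ ω, ‖X ω - a‖ ^ 2 ∂P =
      ‖∫ ω, X ω ∂P - a‖ ^ 2 + ∫ ω, ‖X ω - ∫ ω', X ω' ∂P‖ ^ 2 ∂P := by
  set M := ∫ ω, X ω ∂P
  have hcentered : Integrable (fun ω => X ω - M) P := hX.sub (integrable_const M)
  have hcross : Integrable (fun ω => 2 * inner ℝ (M - a) (X ω - M)) P :=
    (hcentered.const_inner (M - a)).const_mul 2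
  have hcross_zero : ∫ ω, 2 * inner ℝ (M - a) (X ω - M) ∂P = 0 := by
    rw [integral_const_mul, integral_inner hcentered, integral_sub hX (integrable_const M)]
    simp [M]
  have hlinear : Integrable (fun ω => ‖M - a‖ ^ 2 + 2 * inner ℝ (M - a) (X ω - M)) P :=
    (integrable_const _).add hcross
  have hexpand (ω : Ω) : ‖X ω - a‖ ^ 2 =
      ‖M - a‖ ^ 2 + 2 * inner ℝ (M - a) (X ω - M) + ‖X ω - M‖ ^ 2 := by
    rw [← norm_add_sq_real, add_comm, sub_add_sub_cancel]
  simp_rw [hexpand]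
  rw [integral_add hlinear hvar, integral_add (integrable_const _) hcross, hcross_zero]
  simp

theorem sgd_one_step_contraction_general {G : E → ℝ} {G' : E → E} {μ l γ σ : ℝ} {y z : E}
    (hγ : 0 ≤ γ) (hG : ∀ a, HasGradientAt G (G' a) a) (hsc : StrongConvexOn univ μ G)
    (hlip : ∀ a, ‖G' a - G' z‖ ≤ l * ‖a - z‖) (hy : ∀ v, G y ≤ G v)
    {Ω : Type*} [MeasurableSpace Ω] {P : Measure Ω} [IsProbabilityMeasure P] {h : Ω → E}
    (hint : Integrable h P) (hmean : ∫ ω, h ω ∂P = G' z)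
    (hvarint : Integrable (fun ω => ‖h ω - G' z‖ ^ 2) P)
    (hvar : ∫ ω, ‖h ω - G' z‖ ^ 2 ∂P ≤ σ ^ 2) (hstep : γ * l ≤ 1) :
    ∫ ω, ‖z - γ • h ω - y‖ ^ 2 ∂P ≤ (1 - μ * γ) * ‖z - y‖ ^ 2 + γ ^ 2 * σ ^ 2 := by
  have hsmul : Integrable (fun ω => γ • h ω) P := hint.smul γ
  have hiterate : Integrable (fun ω => z - γ • h ω) P := (integrable_const z).sub hsmul
  have hiterate_mean : ∫ ω, (z - γ • h ω) ∂P = z - γ • G' z := by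
    rw [integral_sub (integrable_const z) hsmul, integral_smul, hmean]
    simp
  have hnoise (ω : Ω) : ‖z - γ • h ω - (z - γ • G' z)‖ ^ 2 = γ ^ 2 * ‖h ω - G' z‖ ^ 2 := by
    rw [sub_sub_sub_cancel_left, ← smul_sub, norm_smul, mul_pow, Real.norm_of_nonneg hγ,
      norm_sub_rev]
  have hexact : ‖z - γ • G' z - y‖ ^ 2 ≤ (1 - μ * γ) * ‖z - y‖ ^ 2 :=
    (norm_sub_smul_gradient_sub_sq_le hsc hG hlip hγ hstep y).trans <|
      add_le_of_nonpos_right <| mul_nonpos_of_nonneg_of_nonpos (by positivity) <|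
        sub_nonpos.2 (hy _)
  calc ∫ ω, ‖z - γ • h ω - y‖ ^ 2 ∂P
      = ‖z - γ • G' z - y‖ ^ 2 + γ ^ 2 * ∫ ω, ‖h ω - G' z‖ ^ 2 ∂P := by
        rw [integral_norm_sub_sq_eq_add hiterate, hiterate_mean]
        · simp_rw [hnoise, integral_const_mul]
        · simpa only [hiterate_mean, hnoise] using hvarint.const_mul (γ ^ 2)
    _ ≤ (1 - μ * γ) * ‖z - y‖ ^ 2 + γ ^ 2 * σ ^ 2 := by gcongr

end InnerProductSpace

theorem sgd_one_step_contraction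
    (d : ℕ)
    (G : EuclideanSpace ℝ (Fin d) → ℝ)
    (μ l γ σ : ℝ)
    (hμ : 0 < μ) (hγ : 0 < γ)
    (hG : ContDiff ℝ 1 G)
    (hsc : StrongConvexOn univ μ G)
    (hlip : ∀ a b, ‖gradient G a - gradient G b‖ ≤ l * ‖a - b‖)
    (ystar : EuclideanSpace ℝ (Fin d))
    (hystar : ∀ v, G ystar ≤ G v)
    (z : EuclideanSpace ℝ (Fin d))
    (Ω : Type*) [MeasureSpace Ω] [IsProbabilityMeasure (volume : Measure Ω)]
    (h : Ω → EuclideanSpace ℝ (Fin d))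
    (hint : Integrable h)
    (hmean : (∫ ω, h ω) = gradient G z)
    (hvarint : Integrable (fun ω => ‖h ω - gradient G z‖ ^ 2))
    (hvar : (∫ ω, ‖h ω - gradient G z‖ ^ 2) ≤ σ ^ 2)
    (hstep : γ * l ≤ 1 / 4) :
    (∫ ω, ‖z - γ • h ω - ystar‖ ^ 2) ≤
      (1 - 3 * μ * γ / 4) * ‖z - ystar‖ ^ 2 + γ ^ 2 * σ ^ 2 := by
  have hbound := sgd_one_step_contraction_general hγ.le
    (fun a => (hG.differentiable one_ne_zero a).hasGradientAt) hsc (hlip · z) hystar hint hmean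
    hvarint hvar (hstep.trans (by norm_num))
  linarith [show 0 ≤ μ * γ * ‖z - ystar‖ ^ 2 by positivity]
end
end

section
/- One stochastic gradient step on the Lagrangian contracts towards the Lagrangian minimizer in expectation: if λ ≥ 2 l_{f,1}/μ_g and α (l_{f,1} + λ l_{g,1}) ≤ 1/4, then E[‖y − α (h_f + λ h_g) − y*_λ(x)‖²] ≤ (1 − 3 μ_g α λ/4) ‖y − y*_λ(x)‖² + α² σ_f² + α² λ² σ_g². -/
/-!
For `lam ≥ 2 lf / μ` the curvature `lam μ` of `lam • g` pays twice for the possible concavity `-lf`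
of `f`, so the Lagrangian `f + lam • g` is `lam μ / 2`-strongly convex, with an
`(lf + lam lg)`-Lipschitz gradient. A deterministic gradient step then contracts towards the
minimizer. The stochastic step has the deterministic one as its mean, and its fluctuations are
orthogonal in `L²` both to constants and to one another, so by Pythagoras the noise only adds the
two variances. If `α (lf + lam lg) ≤ ρ ≤ 1`, a step contracts the squared distance by the factor
`1 - (2 - ρ) (α lam μ / 2)`; the constant `3 / 4` is the case `ρ = 1 / 2`.
-/

open Set MeasureTheory

noncomputable section

section NormedSpace

variable {E : Type*} [NormedAddCommGroup E]

lemma nonneg_of_norm_sub_le_mul_norm_sub {G : Type*} [SeminormedAddCommGroup G] [Nontrivial E]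
    {h : E → G} {l : ℝ} (hl : ∀ p q, ‖h p - h q‖ ≤ l * ‖p - q‖) : 0 ≤ l := by
  obtain ⟨p, q, hpq⟩ := exists_pair_ne E
  exact nonneg_of_mul_nonneg_left ((norm_nonneg _).trans (hl p q)) (norm_sub_pos_iff.2 hpq)

variable [NormedSpace ℝ E]

lemma hasDerivAt_comp_add_smul {h : E → ℝ} {y v : E} {t : ℝ}
    (hd : DifferentiableAt ℝ h (y + t • v)) :
    HasDerivAt (fun s : ℝ => h (y + s • v)) (fderiv ℝ h (y + t • v) v) t := by
  have hline : HasDerivAt (fun s : ℝ => y + s • v) v t := by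
    simpa using ((hasDerivAt_id t).smul_const v).const_add y
  exact hd.hasFDerivAt.comp_hasDerivAt t hline

lemma abs_sub_sub_fderiv_le_of_lipschitz_fderiv {h : E → ℝ} {l : ℝ} (hd : Differentiable ℝ h)
    (hl : ∀ p q, ‖fderiv ℝ h p - fderiv ℝ h q‖ ≤ l * ‖p - q‖) (y v : E) :
    |h (y + v) - h y - fderiv ℝ h y v| ≤ l / 2 * ‖v‖ ^ 2 := by
  have hremainder (t : ℝ) :
      HasDerivAt (fun t : ℝ => h (y + t • v) - h y - t * fderiv ℝ h y v)
        (fderiv ℝ h (y + t • v) v - fderiv ℝ h y v) t := by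
    simpa using! ((hasDerivAt_comp_add_smul (hd _)).sub_const (h y)).sub
      ((hasDerivAt_id t).mul_const (fderiv ℝ h y v))
  have hmajorant (t : ℝ) :
      HasDerivAt (fun t : ℝ => l / 2 * ‖v‖ ^ 2 * t ^ 2) (l * ‖v‖ ^ 2 * t) t := by
    refine ((hasDerivAt_pow 2 t).const_mul (l / 2 * ‖v‖ ^ 2)).congr_deriv ?_
    norm_num
    ring
  have hspeed : ∀ t ∈ Ico (0 : ℝ) 1,
      ‖fderiv ℝ h (y + t • v) v - fderiv ℝ h y v‖ ≤ l * ‖v‖ ^ 2 * t := fun t ht => by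
    calc ‖(fderiv ℝ h (y + t • v) - fderiv ℝ h y) v‖
        ≤ ‖fderiv ℝ h (y + t • v) - fderiv ℝ h y‖ * ‖v‖ := ContinuousLinearMap.le_opNorm _ _
      _ ≤ (l * ‖y + t • v - y‖) * ‖v‖ := by gcongr; exact hl _ _
      _ = l * ‖v‖ ^ 2 * t := by
        rw [add_sub_cancel_left, norm_smul, Real.norm_of_nonneg ht.1]; ring
  simpa using image_norm_le_of_norm_deriv_right_le_deriv_boundary (a := 0) (b := 1)
    (fun t _ => (hremainder t).continuousAt.continuousWithinAt)
    (fun t _ => (hremainder t).hasDerivWithinAt) (by simp) hmajorant hspeed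
    (right_mem_Icc.2 zero_le_one)

lemma strongConvexOn_univ_of_add_linearMap_add_le {h : E → ℝ} {m : ℝ} (D : E → E →ₗ[ℝ] ℝ)
    (hD : ∀ y v, h y + D y v + m / 2 * ‖v‖ ^ 2 ≤ h (y + v)) : StrongConvexOn univ m h := by
  refine ⟨convex_univ, fun p _ q _ a b ha hb hab => ?_⟩
  obtain rfl : b = 1 - a := by linarith
  set w := a • p + (1 - a) • q
  have hp : h w + (1 - a) * D w (p - q) + m / 2 * ((1 - a) * ‖p - q‖) ^ 2 ≤ h p := by
    simpa [norm_smul, abs_of_nonneg hb, show w + (1 - a) • (p - q) = p by module]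
      using hD w ((1 - a) • (p - q))
  have hq : h w - a * D w (p - q) + m / 2 * (a * ‖p - q‖) ^ 2 ≤ h q := by
    simpa [norm_smul, abs_of_nonneg ha, ← sub_eq_add_neg,
      show w - a • (p - q) = q by module] using hD w (-(a • (p - q)))
  simp only [smul_eq_mul]
  linear_combination a * hp + (1 - a) * hq

lemma strongConvexOn_neg_of_lipschitz_fderiv {h : E → ℝ} {l : ℝ} (hd : Differentiable ℝ h)
    (hl : ∀ p q, ‖fderiv ℝ h p - fderiv ℝ h q‖ ≤ l * ‖p - q‖) : StrongConvexOn univ (-l) h :=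
  strongConvexOn_univ_of_add_linearMap_add_le (fun y => fderiv ℝ h y) fun y v => by
    rw [ContinuousLinearMap.coe_coe]
    linarith [(abs_le.1 (abs_sub_sub_fderiv_le_of_lipschitz_fderiv hd hl y v)).1]

lemma strongConvexOn_const_smul {s : Set E} {h : E → ℝ} {m c : ℝ} (hc : 0 ≤ c)
    (hh : StrongConvexOn s m h) : StrongConvexOn s (c * m) (c • h) := by
  refine ⟨hh.1, fun p hp q hq a b ha hb hab => ?_⟩
  have := mul_le_mul_of_nonneg_left (hh.2 hp hq ha hb hab) hc
  simp only [Pi.smul_apply, smul_eq_mul] at this ⊢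
  linarith

lemma strongConvexOn_comp_add_smul {h : E → ℝ} {m : ℝ} (hh : StrongConvexOn univ m h) (y v : E) :
    StrongConvexOn univ (m * ‖v‖ ^ 2) (fun t : ℝ => h (y + t • v)) := by
  refine ⟨convex_univ, fun s _ t _ a b ha hb hab => ?_⟩
  have hline : a • (y + s • v) + b • (y + t • v) = y + (a • s + b • t) • v := by
    obtain rfl : b = 1 - a := by linarith
    module
  have hdist : ‖(y + s • v) - (y + t • v)‖ = ‖s - t‖ * ‖v‖ := by
    rw [add_sub_add_left_eq_sub, ← sub_smul, norm_smul]
  have := hh.2 (mem_univ (y + s • v)) (mem_univ (y + t • v)) ha hb hab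
  rw [hline, hdist] at this
  linarith

lemma add_fderiv_add_le_of_strongConvexOn {h : E → ℝ} {m : ℝ} (hh : StrongConvexOn univ m h)
    {y : E} (hd : DifferentiableAt ℝ h y) (v : E) :
    h y + fderiv ℝ h y v + m / 2 * ‖v‖ ^ 2 ≤ h (y + v) := by
  have hconvex := strongConvexOn_iff_convex.1 (strongConvexOn_comp_add_smul hh y v)
  have hline := hasDerivAt_comp_add_smul (y := y) (v := v) (t := 0) (by simpa using hd)
  have hquadratic : HasDerivAt (fun t : ℝ => m * ‖v‖ ^ 2 / 2 * ‖t‖ ^ 2) 0 0 := by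
    simpa using (hasDerivAt_pow 2 (0 : ℝ)).const_mul (m * ‖v‖ ^ 2 / 2)
  have hslope := hconvex.le_slope_of_hasDerivAt (mem_univ 0) (mem_univ 1) one_pos
    (hline.sub hquadratic)
  simp only [zero_smul, add_zero, sub_zero, Real.norm_eq_abs, sq_abs, slope_def_field, one_smul,
    one_pow, mul_one, zero_pow two_ne_zero, mul_zero, div_one] at hslope
  linarith

lemma mul_norm_sub_sq_le_sub_of_isMinOn {h : E → ℝ} {m : ℝ} {z : E}
    (hh : StrongConvexOn univ m h) (hd : DifferentiableAt ℝ h z) (hz : IsMinOn h univ z) (y : E) :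
    m / 2 * ‖y - z‖ ^ 2 ≤ h y - h z := by
  have := add_fderiv_add_le_of_strongConvexOn hh hd (y - z)
  rw [(hz.isLocalMin Filter.univ_mem).fderiv_eq_zero, zero_apply, add_sub_cancel] at this
  linarith

variable {f g : E → ℝ} {lf lg μ c : ℝ}

lemma strongConvexOn_add_const_smul_of_lipschitz_fderiv (hf : Differentiable ℝ f)
    (hfl : ∀ p q, ‖fderiv ℝ f p - fderiv ℝ f q‖ ≤ lf * ‖p - q‖) (hg : StrongConvexOn univ μ g)
    (hc : 0 ≤ c) (hlf : 2 * lf ≤ c * μ) : StrongConvexOn univ (c * μ / 2) (f + c • g) := by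
  refine ((strongConvexOn_neg_of_lipschitz_fderiv hf hfl).add
    (strongConvexOn_const_smul hc hg)).mono fun r => ?_
  rw [Pi.add_apply]
  nlinarith [sq_nonneg r]

lemma norm_fderiv_add_const_smul_sub_le (hf : Differentiable ℝ f)
    (hfl : ∀ p q, ‖fderiv ℝ f p - fderiv ℝ f q‖ ≤ lf * ‖p - q‖) (hg : Differentiable ℝ g)
    (hgl : ∀ p q, ‖fderiv ℝ g p - fderiv ℝ g q‖ ≤ lg * ‖p - q‖) (hc : 0 ≤ c) (p q : E) :
    ‖fderiv ℝ (f + c • g) p - fderiv ℝ (f + c • g) q‖ ≤ (lf + c * lg) * ‖p - q‖ := by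
  have hfderiv (w : E) : fderiv ℝ (f + c • g) w = fderiv ℝ f w + c • fderiv ℝ g w := by
    rw [fderiv_add (hf w) ((hg w).const_smul c), fderiv_const_smul (hg w)]
  calc ‖fderiv ℝ (f + c • g) p - fderiv ℝ (f + c • g) q‖
      = ‖(fderiv ℝ f p - fderiv ℝ f q) + c • (fderiv ℝ g p - fderiv ℝ g q)‖ := by
        rw [hfderiv, hfderiv]; congr 1; module
    _ ≤ ‖fderiv ℝ f p - fderiv ℝ f q‖ + c * ‖fderiv ℝ g p - fderiv ℝ g q‖ := by
        grw [norm_add_le, norm_smul, Real.norm_of_nonneg hc]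
    _ ≤ lf * ‖p - q‖ + c * (lg * ‖p - q‖) := by grw [hfl, hgl]
    _ = (lf + c * lg) * ‖p - q‖ := by ring

end NormedSpace

section PartialDerivative

variable {E F G : Type*} [NormedAddCommGroup E] [NormedSpace ℝ E] [NormedAddCommGroup F]
  [NormedSpace ℝ F] [NormedAddCommGroup G] [NormedSpace ℝ G] {h : E × F → G}

lemma differentiable_comp_prodMk_right (hd : Differentiable ℝ h) (x : E) :
    Differentiable ℝ (fun y => h (x, y)) :=
  fun y => (hd (x, y)).comp y (hasFDerivAt_prodMk_right x y).differentiableAt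

lemma norm_fderiv_comp_prodMk_right_sub_le {l : ℝ} (hd : Differentiable ℝ h)
    (hl : ∀ p q, ‖fderiv ℝ h p - fderiv ℝ h q‖ ≤ l * ‖p - q‖) (x : E) (y y' : F) :
    ‖fderiv ℝ (fun w => h (x, w)) y - fderiv ℝ (fun w => h (x, w)) y'‖ ≤ l * ‖y - y'‖ := by
  have hpartial (w : F) : fderiv ℝ (fun w => h (x, w)) w =
      (fderiv ℝ h (x, w)).comp (ContinuousLinearMap.inr ℝ E F) :=
    ((hd (x, w)).hasFDerivAt.comp w (hasFDerivAt_prodMk_right x w)).fderiv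
  calc ‖fderiv ℝ (fun w => h (x, w)) y - fderiv ℝ (fun w => h (x, w)) y'‖
      = ‖(fderiv ℝ h (x, y) - fderiv ℝ h (x, y')).comp (ContinuousLinearMap.inr ℝ E F)‖ := by
        rw [hpartial, hpartial, ContinuousLinearMap.sub_comp]
    _ ≤ ‖fderiv ℝ h (x, y) - fderiv ℝ h (x, y')‖ * ‖ContinuousLinearMap.inr ℝ E F‖ :=
        ContinuousLinearMap.opNorm_comp_le _ _
    _ ≤ ‖fderiv ℝ h (x, y) - fderiv ℝ h (x, y')‖ :=
        mul_le_of_le_one_right (norm_nonneg _) (ContinuousLinearMap.norm_inr_le_one ℝ E F)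
    _ ≤ l * ‖y - y'‖ := by simpa using hl (x, y) (x, y')

end PartialDerivative

section GradientStep

open scoped Gradient RealInnerProductSpace

variable {F : Type*} [NormedAddCommGroup F] [InnerProductSpace ℝ F] [CompleteSpace F]

lemma gradient_add_const_smul {f g : F → ℝ} {y : F} (hf : DifferentiableAt ℝ f y)
    (hg : DifferentiableAt ℝ g y) (c : ℝ) : ∇ (f + c • g) y = ∇ f y + c • ∇ g y := by
  simp [gradient, fderiv_add hf (hg.const_smul c), fderiv_const_smul hg]

variable {φ : F → ℝ} {L : ℝ} {z : F}

lemma mul_norm_gradient_sq_le_sub_of_isMinOn {t : ℝ} (hd : Differentiable ℝ φ)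
    (hL : ∀ p q, ‖fderiv ℝ φ p - fderiv ℝ φ q‖ ≤ L * ‖p - q‖) (hz : IsMinOn φ univ z)
    (ht : 0 ≤ t) (htL : t * L ≤ 1) (y : F) : t / 2 * ‖∇ φ y‖ ^ 2 ≤ φ y - φ z := by
  have hmin : φ z ≤ φ (y + -(t • ∇ φ y)) := hz (mem_univ _)
  have htaylor :=
    (abs_le.1 (abs_sub_sub_fderiv_le_of_lipschitz_fderiv hd hL y (-(t • ∇ φ y)))).2
  rw [← inner_gradient_left, inner_neg_right, inner_smul_right, real_inner_self_eq_norm_sq,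
    norm_neg, norm_smul, Real.norm_of_nonneg ht] at htaylor
  have hstep : t * L * (t * ‖∇ φ y‖ ^ 2) ≤ 1 * (t * ‖∇ φ y‖ ^ 2) := by gcongr
  linarith

lemma norm_sub_smul_gradient_sub_sq_le_s12 {m α ρ : ℝ} (hd : Differentiable ℝ φ)
    (hL : ∀ p q, ‖fderiv ℝ φ p - fderiv ℝ φ q‖ ≤ L * ‖p - q‖) (hm : StrongConvexOn univ m φ)
    (hz : IsMinOn φ univ z) (hα : 0 ≤ α) (hρ₀ : 0 < ρ) (hρ₁ : ρ ≤ 1) (hstep : α * L ≤ ρ) (y : F) :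
    ‖y - α • ∇ φ y - z‖ ^ 2 ≤ (1 - (2 - ρ) * (α * m)) * ‖y - z‖ ^ 2 := by
  set G := ∇ φ y
  have hgrowth : m / 2 * ‖y - z‖ ^ 2 ≤ φ y - φ z := mul_norm_sub_sq_le_sub_of_isMinOn hm (hd z) hz y
  have hinner : φ y - φ z + m / 2 * ‖y - z‖ ^ 2 ≤ ⟪y - z, G⟫ := by
    have := add_fderiv_add_le_of_strongConvexOn hm (hd y) (z - y)
    rw [← inner_gradient_left, add_sub_cancel, norm_sub_rev, ← neg_sub y z, inner_neg_right,
      real_inner_comm] at this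
    linarith
  have hgradient : α ^ 2 * ‖G‖ ^ 2 ≤ 2 * ρ * α * (φ y - φ z) := by
    have hdescent : α / ρ / 2 * ‖G‖ ^ 2 ≤ φ y - φ z :=
      mul_norm_gradient_sq_le_sub_of_isMinOn hd hL hz (by positivity)
        (by rwa [div_mul_eq_mul_div, div_le_one hρ₀]) y
    calc α ^ 2 * ‖G‖ ^ 2 = 2 * ρ * α * (α / ρ / 2 * ‖G‖ ^ 2) := by field_simp
      _ ≤ 2 * ρ * α * (φ y - φ z) := by gcongr
  calc ‖y - α • G - z‖ ^ 2
      = ‖y - z‖ ^ 2 - 2 * α * ⟪y - z, G⟫ + α ^ 2 * ‖G‖ ^ 2 := by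
        rw [sub_right_comm, norm_sub_sq_real, inner_smul_right, norm_smul, mul_pow,
          Real.norm_eq_abs, sq_abs]
        ring
    _ ≤ ‖y - z‖ ^ 2 - 2 * α * (φ y - φ z + m / 2 * ‖y - z‖ ^ 2) + 2 * ρ * α * (φ y - φ z) := by
        gcongr
    _ = (1 - α * m) * ‖y - z‖ ^ 2 - 2 * (1 - ρ) * α * (φ y - φ z) := by ring
    _ ≤ (1 - α * m) * ‖y - z‖ ^ 2 - 2 * (1 - ρ) * α * (m / 2 * ‖y - z‖ ^ 2) := by
        have := sub_nonneg.2 hρ₁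
        gcongr
    _ = (1 - (2 - ρ) * (α * m)) * ‖y - z‖ ^ 2 := by ring

end GradientStep

section Noise

open ProbabilityTheory
open scoped RealInnerProductSpace

lemma memLp_two_of_integrable_norm_sub_sq {E Ω : Type*} [NormedAddCommGroup E] [MeasurableSpace Ω]
    {P : Measure Ω} [IsFiniteMeasure P] {X : Ω → E} (hX : AEStronglyMeasurable X P) {a : E}
    (hXa : Integrable (fun ω => ‖X ω - a‖ ^ 2) P) : MemLp X 2 P := by
  have hcentred : MemLp (fun ω => X ω - a) 2 P :=
    (memLp_two_iff_integrable_sq_norm (hX.sub aestronglyMeasurable_const)).2 hXa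
  refine (hcentred.add (memLp_const a)).ae_eq (.of_forall fun ω => ?_)
  simp

variable {F Ω : Type*} [NormedAddCommGroup F] [InnerProductSpace ℝ F] [MeasurableSpace Ω]
  {P : Measure Ω} {X Y : Ω → F}

lemma integral_norm_add_sq_of_integral_inner_eq_zero (hX : MemLp X 2 P) (hY : MemLp Y 2 P)
    (hXY : ∫ ω, ⟪X ω, Y ω⟫ ∂P = 0) :
    ∫ ω, ‖X ω + Y ω‖ ^ 2 ∂P = ∫ ω, ‖X ω‖ ^ 2 ∂P + ∫ ω, ‖Y ω‖ ^ 2 ∂P := by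
  have hX2 : Integrable (fun ω => ‖X ω‖ ^ 2) P := hX.integrable_norm_pow two_ne_zero
  have hY2 : Integrable (fun ω => ‖Y ω‖ ^ 2) P := hY.integrable_norm_pow two_ne_zero
  have hinner : Integrable (fun ω => ⟪X ω, Y ω⟫) P :=
    memLp_one_iff_integrable.1 ((innerSL ℝ).memLp_of_bilin 1 hX hY)
  simp_rw [norm_add_sq_real]
  rw [integral_add (by fun_prop) hY2, integral_add hX2 (by fun_prop), integral_const_mul, hXY]
  ring

variable {a b : F}

lemma integral_norm_add_const_smul_sub_sq [IsFiniteMeasure P] (hX : MemLp X 2 P) (hY : MemLp Y 2 P)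
    (hXY : ∫ ω, ⟪X ω - a, Y ω - b⟫ ∂P = 0) (c : ℝ) :
    ∫ ω, ‖X ω + c • Y ω - (a + c • b)‖ ^ 2 ∂P =
      ∫ ω, ‖X ω - a‖ ^ 2 ∂P + c ^ 2 * ∫ ω, ‖Y ω - b‖ ^ 2 ∂P := by
  have hsplit (ω : Ω) : X ω + c • Y ω - (a + c • b) = (X ω - a) + c • (Y ω - b) := by module
  have hXnoise : MemLp (fun ω => X ω - a) 2 P := hX.sub (memLp_const a)
  have hYnoise : MemLp (fun ω => c • (Y ω - b)) 2 P := (hY.sub (memLp_const b)).const_smul c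
  have horth : ∫ ω, ⟪X ω - a, c • (Y ω - b)⟫ ∂P = 0 := by
    simp_rw [inner_smul_right, integral_const_mul, hXY, mul_zero]
  simp_rw [hsplit]
  rw [integral_norm_add_sq_of_integral_inner_eq_zero hXnoise hYnoise horth]
  simp_rw [norm_smul, mul_pow, Real.norm_eq_abs, sq_abs, integral_const_mul]

variable [CompleteSpace F] [IsProbabilityMeasure P]

lemma integral_norm_sub_const_smul_sq (hX : MemLp X 2 P) (ha : ∫ ω, X ω ∂P = a) (w : F) (α : ℝ) :
    ∫ ω, ‖w - α • X ω‖ ^ 2 ∂P = ‖w - α • a‖ ^ 2 + α ^ 2 * ∫ ω, ‖X ω - a‖ ^ 2 ∂P := by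
  have hsplit (ω : Ω) : w - α • X ω = (w - α • a) + (-α) • (X ω - a) := by module
  have hXint : Integrable X P := hX.integrable one_le_two
  have hXnoise : MemLp (fun ω => (-α) • (X ω - a)) 2 P := (hX.sub (memLp_const a)).const_smul (-α)
  have hcentred : ∫ ω, X ω - a ∂P = 0 := by
    simp [integral_sub hXint (integrable_const a), ha]
  have horth : ∫ ω, ⟪w - α • a, (-α) • (X ω - a)⟫ ∂P = 0 := by
    rw [integral_inner (by fun_prop), integral_smul, hcentred, smul_zero, inner_zero_right]
  simp_rw [hsplit]
  rw [integral_norm_add_sq_of_integral_inner_eq_zero (memLp_const _) hXnoise horth]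
  simp [norm_smul, mul_pow, integral_const_mul]

lemma integral_norm_sub_const_smul_add_sq (hX : MemLp X 2 P) (hY : MemLp Y 2 P)
    (ha : ∫ ω, X ω ∂P = a) (hb : ∫ ω, Y ω ∂P = b) (hXY : ∫ ω, ⟪X ω - a, Y ω - b⟫ ∂P = 0)
    (w : F) (α c : ℝ) :
    ∫ ω, ‖w - α • (X ω + c • Y ω)‖ ^ 2 ∂P = ‖w - α • (a + c • b)‖ ^ 2 +
      α ^ 2 * (∫ ω, ‖X ω - a‖ ^ 2 ∂P + c ^ 2 * ∫ ω, ‖Y ω - b‖ ^ 2 ∂P) := by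
  have hZ : MemLp (fun ω => X ω + c • Y ω) 2 P := hX.add (hY.const_smul c)
  have hXint : Integrable X P := hX.integrable one_le_two
  have hYint : Integrable Y P := hY.integrable one_le_two
  have hmean : ∫ ω, X ω + c • Y ω ∂P = a + c • b := by
    rw [integral_add hXint (by fun_prop), integral_smul, ha, hb]
  rw [integral_norm_sub_const_smul_sq hZ hmean, integral_norm_add_const_smul_sub_sq hX hY hXY]

lemma integral_inner_sub_eq_zero_of_indepFun [MeasurableSpace F] [BorelSpace F]
    (hXY : IndepFun X Y P) (hX : Integrable X P) (hY : Integrable Y P) (ha : ∫ ω, X ω ∂P = a) :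
    ∫ ω, ⟪X ω - a, Y ω - b⟫ ∂P = 0 := by
  have hindep : IndepFun (fun ω => X ω - a) (fun ω => Y ω - b) P :=
    hXY.comp (φ := fun v => v - a) (ψ := fun v => v - b)
      (continuous_sub_right a).measurable (continuous_sub_right b).measurable
  have hcentred : ∫ ω, X ω - a ∂P = 0 := by
    simp [integral_sub hX (integrable_const a), ha]
  have hfactor := hindep.integral_bilin (hX.sub (integrable_const a))
    (hY.sub (integrable_const b)) (innerSL ℝ)
  rwa [hcentred, map_zero, zero_apply] at hfactor

end Noise

section Lagrangian

open scoped Gradient RealInnerProductSpace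

theorem lagrangian_sgd_one_step_contraction_general {F Ω : Type*} [NormedAddCommGroup F]
    [InnerProductSpace ℝ F] [CompleteSpace F] [MeasurableSpace Ω] {P : Measure Ω}
    [IsProbabilityMeasure P] {f g : F → ℝ} {lf lg μ α lam ρ σf σg : ℝ} {y z : F} {X Y : Ω → F}
    (hf : Differentiable ℝ f) (hfl : ∀ p q, ‖fderiv ℝ f p - fderiv ℝ f q‖ ≤ lf * ‖p - q‖)
    (hg : Differentiable ℝ g) (hgl : ∀ p q, ‖fderiv ℝ g p - fderiv ℝ g q‖ ≤ lg * ‖p - q‖)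
    (hμ : 0 < μ) (hgμ : StrongConvexOn univ μ g) (hlam : 2 * lf / μ ≤ lam)
    (hz : IsMinOn (f + lam • g) univ z)
    (hX : MemLp X 2 P) (hXmean : ∫ ω, X ω ∂P = ∇ f y)
    (hXvar : ∫ ω, ‖X ω - ∇ f y‖ ^ 2 ∂P ≤ σf ^ 2)
    (hY : MemLp Y 2 P) (hYmean : ∫ ω, Y ω ∂P = ∇ g y)
    (hYvar : ∫ ω, ‖Y ω - ∇ g y‖ ^ 2 ∂P ≤ σg ^ 2)
    (hXY : ∫ ω, ⟪X ω - ∇ f y, Y ω - ∇ g y⟫ ∂P = 0)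
    (hα : 0 ≤ α) (hρ₀ : 0 < ρ) (hρ₁ : ρ ≤ 1) (hstep : α * (lf + lam * lg) ≤ ρ) :
    ∫ ω, ‖y - α • (X ω + lam • Y ω) - z‖ ^ 2 ∂P ≤
      (1 - (2 - ρ) * (α * (lam * μ / 2))) * ‖y - z‖ ^ 2 +
        α ^ 2 * σf ^ 2 + α ^ 2 * lam ^ 2 * σg ^ 2 := by
  rcases subsingleton_or_nontrivial F with _ | _
  · simp only [Subsingleton.elim _ (0 : F), norm_zero, zero_pow two_ne_zero, integral_zero,
      mul_zero, zero_add]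
    positivity
  have hlf : 0 ≤ lf := nonneg_of_norm_sub_le_mul_norm_sub hfl
  have hlam₀ : 0 ≤ lam := le_trans (by positivity) hlam
  have hcontract : ‖y - α • (∇ f y + lam • ∇ g y) - z‖ ^ 2 ≤
      (1 - (2 - ρ) * (α * (lam * μ / 2))) * ‖y - z‖ ^ 2 := by
    rw [← gradient_add_const_smul (hf y) (hg y)]
    exact norm_sub_smul_gradient_sub_sq_le_s12 (hf.add (hg.const_smul lam))
      (norm_fderiv_add_const_smul_sub_le hf hfl hg hgl hlam₀)
      (strongConvexOn_add_const_smul_of_lipschitz_fderiv hf hfl hgμ hlam₀ ((div_le_iff₀ hμ).1 hlam))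
      hz hα hρ₀ hρ₁ hstep y
  calc ∫ ω, ‖y - α • (X ω + lam • Y ω) - z‖ ^ 2 ∂P
      = ‖y - α • (∇ f y + lam • ∇ g y) - z‖ ^ 2 + α ^ 2 *
          (∫ ω, ‖X ω - ∇ f y‖ ^ 2 ∂P + lam ^ 2 * ∫ ω, ‖Y ω - ∇ g y‖ ^ 2 ∂P) := by
        simp_rw [sub_right_comm y _ z]
        exact integral_norm_sub_const_smul_add_sq hX hY hXmean hYmean hXY (y - z) α lam
    _ ≤ (1 - (2 - ρ) * (α * (lam * μ / 2))) * ‖y - z‖ ^ 2 +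
          α ^ 2 * (σf ^ 2 + lam ^ 2 * σg ^ 2) := by gcongr
    _ = _ := by ring

end Lagrangian

theorem lagrangian_sgd_one_step_contraction
    (dx dy : ℕ)
    (f g : EuclideanSpace ℝ (Fin dx) × EuclideanSpace ℝ (Fin dy) → ℝ)
    (lf1 lg1 μg : ℝ)
    (hμg : 0 < μg)
    (hf : ContDiff ℝ 1 f)
    (hf1 : ∀ p q, ‖fderiv ℝ f p - fderiv ℝ f q‖ ≤ lf1 * ‖p - q‖)
    (hg : ContDiff ℝ 1 g)
    (hg1 : ∀ p q, ‖fderiv ℝ g p - fderiv ℝ g q‖ ≤ lg1 * ‖p - q‖)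
    (hsc : ∀ x, StrongConvexOn univ μg (fun y => g (x, y)))
    (ystar : EuclideanSpace ℝ (Fin dx) → EuclideanSpace ℝ (Fin dy))
    (hystar : ∀ x y, g (x, ystar x) ≤ g (x, y))
    (ystarlam : ℝ → EuclideanSpace ℝ (Fin dx) → EuclideanSpace ℝ (Fin dy))
    (hystarlam : ∀ lam x, 2 * lf1 / μg ≤ lam → ∀ y,
      f (x, ystarlam lam x) + lam * (g (x, ystarlam lam x) - g (x, ystar x)) ≤
      f (x, y) + lam * (g (x, y) - g (x, ystar x)))
    (x : EuclideanSpace ℝ (Fin dx)) (y : EuclideanSpace ℝ (Fin dy))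
    (α lam σf σg : ℝ) (hα : 0 < α)
    (Ω : Type*) [MeasureSpace Ω] [IsProbabilityMeasure (volume : Measure Ω)]
    (hfr hgr : Ω → EuclideanSpace ℝ (Fin dy))
    (hindep : ProbabilityTheory.IndepFun hfr hgr)
    (hfint : Integrable hfr) (hgint : Integrable hgr)
    (hfmean : (∫ ω, hfr ω) = gradient (fun y' => f (x, y')) y)
    (hgmean : (∫ ω, hgr ω) = gradient (fun y' => g (x, y')) y)
    (hfvarint : Integrable (fun ω => ‖hfr ω - gradient (fun y' => f (x, y')) y‖ ^ 2))
    (hgvarint : Integrable (fun ω => ‖hgr ω - gradient (fun y' => g (x, y')) y‖ ^ 2))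
    (hfvar : (∫ ω, ‖hfr ω - gradient (fun y' => f (x, y')) y‖ ^ 2) ≤ σf ^ 2)
    (hgvar : (∫ ω, ‖hgr ω - gradient (fun y' => g (x, y')) y‖ ^ 2) ≤ σg ^ 2)
    (hlam : 2 * lf1 / μg ≤ lam)
    (hstep : α * (lf1 + lam * lg1) ≤ 1 / 4) :
    (∫ ω, ‖y - α • (hfr ω + lam • hgr ω) - ystarlam lam x‖ ^ 2) ≤
      (1 - 3 * μg * α * lam / 4) * ‖y - ystarlam lam x‖ ^ 2 +
        α ^ 2 * σf ^ 2 + α ^ 2 * lam ^ 2 * σg ^ 2 := by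
  refine (lagrangian_sgd_one_step_contraction_general (ρ := 1 / 2)
    (differentiable_comp_prodMk_right (hf.differentiable one_ne_zero) x)
    (norm_fderiv_comp_prodMk_right_sub_le (hf.differentiable one_ne_zero) hf1 x)
    (differentiable_comp_prodMk_right (hg.differentiable one_ne_zero) x)
    (norm_fderiv_comp_prodMk_right_sub_le (hg.differentiable one_ne_zero) hg1 x)
    hμg (hsc x) hlam (isMinOn_univ_iff.2 fun y' => ?_)
    (memLp_two_of_integrable_norm_sub_sq hfint.1 hfvarint) hfmean hfvar
    (memLp_two_of_integrable_norm_sub_sq hgint.1 hgvarint) hgmean hgvar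
    (integral_inner_sub_eq_zero_of_indepFun hindep hfint hgint hfmean)
    hα.le (by norm_num) (by norm_num) (hstep.trans (by norm_num))).trans_eq (by ring)
  simp only [Pi.add_apply, Pi.smul_apply, smul_eq_mul]
  linarith [hystarlam lam x hlam y']
end
end

section
/- Deterministic per-iteration descent of the bilevel objective: let λ ≥ 2 l_{f,1}/μ_g, let ŷ, ẑ ∈ ℝ^{d_y}, set q := ∇_x f(x, ŷ) + λ (∇_x g(x, ŷ) − ∇_x g(x, ẑ)), and let x' := x − ξ α q with step size satisfying ξ α l_{F,1} ≤ 1/2. Then F(x') − F(x) ≤ −(ξα/2) ‖∇F(x)‖² − (ξα/4) ‖q‖² + (3ξα/2) ( 4 l_{g,1}² λ² ‖ŷ − y*_λ(x)‖² + l_{g,1}² λ² ‖ẑ − y*(x)‖² + C_λ²/λ² ), where C_λ := (4 l_{f,0} l_{g,1}/μ_g²)·(l_{f,1} + 2 l_{f,0} l_{g,2}/μ_g). -/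
open Set

noncomputable section

/-!
At `y* = ystar x`, let `w` solve the adjoint equation `∂_yy g w = ∂_y f`. Then `∇F` is the
`x`-component of `Df - D²g (0, w)`, while the penalized derivative at `(y_λ, y*)` is
`Df + D²g (0, λ (y_λ - y*)) + T` with a Taylor remainder `T`. The `y`-component of the former
vanishes by the choice of `w`, that of the latter by stationarity of `y_λ` and `y*`. They differ by
`T + D²g (0, u)` with `u = λ (y_λ - y*) + w`, so `∂_yy g u = -T` in the `y`-directions and
`‖u‖ ≤ ‖T‖ / μ`; hence the bias of the penalized hypergradient is at most
`(1 + l_{g,1} / μ) ‖T‖`. This is `O(1 / λ)` because strong convexity gives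
`‖y_λ - y*‖ ≤ l_{f,0} / (λ μ)`. The direction `q` is therefore an inexact gradient of `F`, and the
descent lemma for `F` applies to the step.
-/

open Filter Topology InnerProductSpace

variable {E F : Type*}

lemma nonneg_of_forall_norm_sub_le {G : Type*} [NormedAddCommGroup E] [Nontrivial E]
    [SeminormedAddCommGroup G] {D : E → G} {L : ℝ} (hD : ∀ a b, ‖D a - D b‖ ≤ L * ‖a - b‖) :
    0 ≤ L := by
  obtain ⟨a, ha⟩ := exists_ne (0 : E)
  have h := (norm_nonneg _).trans (hD a 0)
  rw [sub_zero] at h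
  exact nonneg_of_mul_nonneg_left h (norm_pos_iff.mpr ha)

section Lipschitz

variable [NormedAddCommGroup E] [NormedSpace ℝ E]

lemma norm_sub_sub_fderiv_le_of_fderiv_lipschitz {G : Type*} [NormedAddCommGroup G]
    [NormedSpace ℝ G] {D : E → G} {L : ℝ} (hL₀ : 0 ≤ L) (hD : Differentiable ℝ D)
    (hL : ∀ a b, ‖fderiv ℝ D a - fderiv ℝ D b‖ ≤ L * ‖a - b‖) (a b : E) :
    ‖D b - D a - fderiv ℝ D a (b - a)‖ ≤ L * ‖b - a‖ ^ 2 := by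
  have hball : ∀ z ∈ Metric.closedBall a ‖b - a‖,
      ‖fderiv ℝ D z - fderiv ℝ D a‖ ≤ L * ‖b - a‖ := fun z hz =>
    (hL z a).trans (mul_le_mul_of_nonneg_left (mem_closedBall_iff_norm.mp hz) hL₀)
  have h := (convex_closedBall a ‖b - a‖).norm_image_sub_le_of_norm_fderiv_le'
    (fun z _ => hD z) hball (Metric.mem_closedBall_self (norm_nonneg _))
    (mem_closedBall_iff_norm.mpr le_rfl)
  rwa [mul_assoc, ← pow_two] at h

lemma le_add_fderiv_add_sq_of_fderiv_lipschitz {φ : E → ℝ} {L : ℝ} (hφ : Differentiable ℝ φ)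
    (hL : ∀ a b, ‖fderiv ℝ φ a - fderiv ℝ φ b‖ ≤ L * ‖a - b‖) (a b : E) :
    φ b ≤ φ a + fderiv ℝ φ a (b - a) + L / 2 * ‖b - a‖ ^ 2 := by
  have hline (t : ℝ) : HasDerivAt (φ ∘ AffineMap.lineMap a b)
      (fderiv ℝ φ (AffineMap.lineMap a b t) (b - a)) t :=
    (hφ _).hasFDerivAt.comp_hasDerivAt t AffineMap.hasDerivAt_lineMap
  have hquad (t : ℝ) : HasDerivAt
      (fun t : ℝ => φ a + t * fderiv ℝ φ a (b - a) + L / 2 * ‖b - a‖ ^ 2 * t ^ 2)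
      (fderiv ℝ φ a (b - a) + L * ‖b - a‖ ^ 2 * t) t := by
    have h₁ := ((hasDerivAt_id t).mul_const (fderiv ℝ φ a (b - a))).const_add (φ a)
    have h₂ := ((hasDerivAt_id t).pow 2).const_mul (L / 2 * ‖b - a‖ ^ 2)
    refine (h₁.add h₂).congr_deriv ?_
    simp only [id_eq, Nat.cast_ofNat, Nat.add_one_sub_one, pow_one]
    ring
  have hslope (t : ℝ) (ht : 0 ≤ t) : fderiv ℝ φ (AffineMap.lineMap a b t) (b - a) ≤
      fderiv ℝ φ a (b - a) + L * ‖b - a‖ ^ 2 * t := by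
    have h := (Real.le_norm_self _).trans
      ((fderiv ℝ φ (AffineMap.lineMap a b t) - fderiv ℝ φ a).le_of_opNorm_le (hL _ _) (b - a))
    rw [← dist_eq_norm, dist_lineMap_left, Real.norm_of_nonneg ht, dist_comm, dist_eq_norm,
      sub_apply] at h
    linarith
  have h := image_le_of_deriv_right_le_deriv_boundary (a := 0) (b := 1)
    (fun t _ => (hline t).continuousAt.continuousWithinAt)
    (fun t _ => (hline t).hasDerivWithinAt) (by simp)
    (fun t _ => (hquad t).continuousAt.continuousWithinAt)
    (fun t _ => (hquad t).hasDerivWithinAt) (fun t ht => hslope t ht.1)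
    (right_mem_Icc.mpr zero_le_one)
  simpa using h

end Lipschitz

lemma inexact_gradient_step_le [NormedAddCommGroup E] [InnerProductSpace ℝ E] [CompleteSpace E]
    {φ : E → ℝ} {L s : ℝ} (hs : 0 ≤ s) (hsL : s * L ≤ 1 / 2) (hφ : Differentiable ℝ φ)
    (hL : ∀ a b, ‖gradient φ a - gradient φ b‖ ≤ L * ‖a - b‖) (x q : E) :
    φ (x - s • q) - φ x ≤
      -(s / 2) * ‖gradient φ x‖ ^ 2 - s / 4 * ‖q‖ ^ 2 + s / 2 * ‖q - gradient φ x‖ ^ 2 := by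
  have hL' (a b : E) : ‖fderiv ℝ φ a - fderiv ℝ φ b‖ ≤ L * ‖a - b‖ := by
    simpa only [gradient, ← map_sub, LinearIsometryEquiv.norm_map] using hL a b
  have hdescent := le_add_fderiv_add_sq_of_fderiv_lipschitz hφ hL' x (x - s • q)
  rw [sub_sub_cancel_left, ← inner_gradient_left, inner_neg_right, inner_smul_right, norm_neg,
    norm_smul, Real.norm_of_nonneg hs] at hdescent
  have hpolar := norm_sub_sq_real q (gradient φ x)
  rw [real_inner_comm] at hpolar
  have hstep : s * L * (s * ‖q‖ ^ 2) ≤ 1 / 2 * (s * ‖q‖ ^ 2) := by gcongr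
  rw [hpolar]
  linarith

section StrongConvexity

lemma fderiv_sub_apply_nonneg_of_convexOn [NormedAddCommGroup E] [NormedSpace ℝ E] {φ : E → ℝ}
    (hφ : ConvexOn ℝ univ φ) (hd : Differentiable ℝ φ) (a b : E) :
    0 ≤ (fderiv ℝ φ b - fderiv ℝ φ a) (b - a) := by
  have hline (t : ℝ) : HasDerivAt (φ ∘ AffineMap.lineMap a b)
      (fderiv ℝ φ (AffineMap.lineMap a b t) (b - a)) t :=
    (hd _).hasFDerivAt.comp_hasDerivAt t AffineMap.hasDerivAt_lineMap
  have hmono := (hφ.comp_affineMap (AffineMap.lineMap a b)).monotoneOn_deriv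
    (fun t _ => (hline t).differentiableAt) (mem_univ 0) (mem_univ 1) zero_le_one
  rw [(hline 0).deriv, (hline 1).deriv, AffineMap.lineMap_apply_zero,
    AffineMap.lineMap_apply_one] at hmono
  rwa [sub_apply, sub_nonneg]

lemma mul_norm_le_norm_of_mul_norm_sq_le_apply [NormedAddCommGroup F] [NormedSpace ℝ F]
    {T : F →L[ℝ] ℝ} {m : ℝ} {v : F} (h : m * ‖v‖ ^ 2 ≤ T v) : m * ‖v‖ ≤ ‖T‖ := by
  rcases (norm_nonneg v).eq_or_lt with hv | hv
  · rw [← hv, mul_zero]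
    exact norm_nonneg T
  · refine le_of_mul_le_mul_right ?_ hv
    calc m * ‖v‖ * ‖v‖ = m * ‖v‖ ^ 2 := by ring
      _ ≤ ‖T‖ * ‖v‖ := h.trans ((Real.le_norm_self _).trans (T.le_opNorm v))

variable [NormedAddCommGroup F] [InnerProductSpace ℝ F] {φ : F → ℝ} {m : ℝ}

lemma mul_norm_sq_le_fderiv_sub_apply_of_strongConvexOn (hφ : StrongConvexOn univ m φ)
    (hd : Differentiable ℝ φ) (a b : F) :
    m * ‖b - a‖ ^ 2 ≤ (fderiv ℝ φ b - fderiv ℝ φ a) (b - a) := by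
  have hder (c : F) : HasFDerivAt (fun y => φ y - m / 2 * ‖y‖ ^ 2)
      (fderiv ℝ φ c - (m / 2) • 2 • innerSL ℝ c) c :=
    (hd c).hasFDerivAt.sub ((hasStrictFDerivAt_norm_sq c).hasFDerivAt.const_mul (m / 2))
  have h := fderiv_sub_apply_nonneg_of_convexOn (strongConvexOn_iff_convex.mp hφ)
    (fun c => (hder c).differentiableAt) a b
  rw [(hder a).fderiv, (hder b).fderiv] at h
  rw [← real_inner_self_eq_norm_sq, inner_sub_left]
  simp only [sub_apply, smul_apply, innerSL_apply_apply, smul_eq_mul, nsmul_eq_mul,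
    Nat.cast_ofNat] at h ⊢
  linarith

lemma mul_norm_sub_le_norm_fderiv_sub_of_strongConvexOn (hφ : StrongConvexOn univ m φ)
    (hd : Differentiable ℝ φ) (a b : F) : m * ‖b - a‖ ≤ ‖fderiv ℝ φ b - fderiv ℝ φ a‖ :=
  mul_norm_le_norm_of_mul_norm_sq_le_apply
    (mul_norm_sq_le_fderiv_sub_apply_of_strongConvexOn hφ hd a b)

lemma eq_of_fderiv_eq_of_strongConvexOn (hm : 0 < m) (hφ : StrongConvexOn univ m φ)
    (hd : Differentiable ℝ φ) {a b : F} (h : fderiv ℝ φ a = fderiv ℝ φ b) : a = b := by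
  have hab := mul_norm_sub_le_norm_fderiv_sub_of_strongConvexOn hφ hd b a
  rw [h, sub_self, norm_zero] at hab
  exact sub_eq_zero.mp (norm_le_zero_iff.mp (nonpos_of_mul_nonpos_right hab hm))

lemma le_of_strongConvexOn_of_fderiv_lipschitz [Nontrivial F] {L : ℝ}
    (hφ : StrongConvexOn univ m φ) (hd : Differentiable ℝ φ)
    (hL : ∀ a b, ‖fderiv ℝ φ a - fderiv ℝ φ b‖ ≤ L * ‖a - b‖) : m ≤ L := by
  obtain ⟨v, hv⟩ := exists_ne (0 : F)
  have h := (mul_norm_sub_le_norm_fderiv_sub_of_strongConvexOn hφ hd 0 v).trans (hL v 0)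
  rw [sub_zero] at h
  exact le_of_mul_le_mul_right h (norm_pos_iff.mpr hv)

lemma mul_norm_sq_le_fderiv_fderiv_apply_of_strongConvexOn (hφ : StrongConvexOn univ m φ)
    (hd : Differentiable ℝ φ) {a : F} (hd₂ : DifferentiableAt ℝ (fderiv ℝ φ) a) (v : F) :
    m * ‖v‖ ^ 2 ≤ fderiv ℝ (fderiv ℝ φ) a v v := by
  have hline : HasDerivAt (fun t : ℝ => a + t • v) v 0 := by
    simpa using ((hasDerivAt_id (0 : ℝ)).smul_const v).const_add a
  have hder : HasDerivAt (fun t : ℝ => fderiv ℝ φ (a + t • v) v)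
      (fderiv ℝ (fderiv ℝ φ) a v v) 0 := by
    have h := hd₂.hasFDerivAt.comp_hasDerivAt_of_eq 0 hline (by simp)
    simpa using h.clm_apply (hasDerivAt_const (0 : ℝ) v)
  refine ge_of_tendsto hder.tendsto_slope_zero_right ?_
  filter_upwards [self_mem_nhdsWithin] with t (ht : 0 < t)
  have h := mul_norm_sq_le_fderiv_sub_apply_of_strongConvexOn hφ hd a (a + t • v)
  rw [add_sub_cancel_left, map_smul, norm_smul, Real.norm_of_nonneg ht.le, sub_apply,
    smul_eq_mul] at h
  simp only [zero_add, zero_smul, add_zero, smul_eq_mul]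
  rw [le_inv_mul_iff₀ ht]
  refine le_of_mul_le_mul_left ?_ ht
  linarith

lemma mul_norm_sub_minimizer_le_norm_fderiv {ψ : F → ℝ} {lam : ℝ} {y₀ y₁ : F} (hlam : 0 ≤ lam)
    (hψ : Differentiable ℝ ψ) (hφ : StrongConvexOn univ m φ) (hd : Differentiable ℝ φ)
    (hy₀ : ∀ y, φ y₀ ≤ φ y) (hy₁ : ∀ y, ψ y₁ + lam * φ y₁ ≤ ψ y + lam * φ y) :
    lam * (m * ‖y₁ - y₀‖) ≤ ‖fderiv ℝ ψ y₁‖ := by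
  have h₀ : fderiv ℝ φ y₀ = 0 := IsLocalMin.fderiv_eq_zero (.of_forall hy₀)
  have h₁ : fderiv ℝ ψ y₁ + lam • fderiv ℝ φ y₁ = 0 := by
    rw [← fderiv_const_mul (hd y₁), ← fderiv_fun_add (hψ y₁) ((hd y₁).const_mul lam)]
    exact IsLocalMin.fderiv_eq_zero (.of_forall hy₁)
  calc lam * (m * ‖y₁ - y₀‖) ≤ lam * ‖fderiv ℝ φ y₁ - fderiv ℝ φ y₀‖ := by
        gcongr
        exact mul_norm_sub_le_norm_fderiv_sub_of_strongConvexOn hφ hd y₀ y₁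
    _ = ‖fderiv ℝ ψ y₁‖ := by
      rw [h₀, sub_zero, eq_neg_of_add_eq_zero_left h₁, norm_neg, norm_smul,
        Real.norm_of_nonneg hlam]

end StrongConvexity

section PartialDerivatives

variable [NormedAddCommGroup E] [NormedSpace ℝ E] [NormedAddCommGroup F] [NormedSpace ℝ F]

lemma norm_comp_inl_le {G : Type*} [NormedAddCommGroup G] [NormedSpace ℝ G] (T : E × F →L[ℝ] G) :
    ‖T ∘L .inl ℝ E F‖ ≤ ‖T‖ :=
  (T.opNorm_comp_le _).trans
    (mul_le_of_le_one_right (norm_nonneg T) (ContinuousLinearMap.norm_inl_le_one ℝ E F))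

lemma norm_comp_inr_le {G : Type*} [NormedAddCommGroup G] [NormedSpace ℝ G] (T : E × F →L[ℝ] G) :
    ‖T ∘L .inr ℝ E F‖ ≤ ‖T‖ :=
  (T.opNorm_comp_le _).trans
    (mul_le_of_le_one_right (norm_nonneg T) (ContinuousLinearMap.norm_inr_le_one ℝ E F))

lemma fderiv_comp_prodMk_left_s15 {G : Type*} [NormedAddCommGroup G] [NormedSpace ℝ G] {φ : E × F → G}
    (hφ : Differentiable ℝ φ) (x : E) (y : F) :
    fderiv ℝ (fun x' => φ (x', y)) x = fderiv ℝ φ (x, y) ∘L .inl ℝ E F :=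
  ((hφ (x, y)).hasFDerivAt.comp x (hasFDerivAt_prodMk_left x y)).fderiv

lemma fderiv_comp_prodMk_right_s15 {G : Type*} [NormedAddCommGroup G] [NormedSpace ℝ G]
    {φ : E × F → G} (hφ : Differentiable ℝ φ) (x : E) (y : F) :
    fderiv ℝ (fun y' => φ (x, y')) y = fderiv ℝ φ (x, y) ∘L .inr ℝ E F :=
  ((hφ (x, y)).hasFDerivAt.comp y (hasFDerivAt_prodMk_right x y)).fderiv

end PartialDerivatives

section Minimizer

set_option maxSynthPendingDepth 3

lemma isInvertible_of_isCoercive [NormedAddCommGroup F] [InnerProductSpace ℝ F] [CompleteSpace F]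
    {B : F →L[ℝ] F →L[ℝ] ℝ} (hB : IsCoercive B) : B.IsInvertible := by
  refine ⟨hB.continuousLinearEquivOfBilin.trans (toDual ℝ F).toContinuousLinearEquiv, ?_⟩
  ext v k
  simp

variable [NormedAddCommGroup E] [NormedSpace ℝ E] [NormedAddCommGroup F] [InnerProductSpace ℝ F]
  {f g : E × F → ℝ} {m : ℝ} {ystar : E → F}

lemma mul_norm_sq_le_fderiv_fderiv_inr_apply {x : E} (hg : ContDiff ℝ 2 g)
    (hsc : StrongConvexOn univ m fun y => g (x, y)) (y v : F) :
    m * ‖v‖ ^ 2 ≤ fderiv ℝ (fderiv ℝ g) (x, y) (0, v) (0, v) := by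
  have hd : Differentiable ℝ g := hg.differentiable two_ne_zero
  have hd₂ : Differentiable ℝ (fderiv ℝ g) :=
    (hg.fderiv_right (m := 1) (by norm_num)).differentiable one_ne_zero
  have hslice : (fderiv ℝ fun y' => g (x, y')) = fun y' => fderiv ℝ g (x, y') ∘L .inr ℝ E F :=
    funext (fderiv_comp_prodMk_right_s15 hd x)
  have hder : HasFDerivAt (fderiv ℝ fun y' => g (x, y'))
      ((ContinuousLinearMap.inr ℝ E F).precomp ℝ ∘L fderiv ℝ (fderiv ℝ g) (x, y) ∘L .inr ℝ E F)
      y := by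
    have hcomp : HasFDerivAt (fun y' => fderiv ℝ g (x, y'))
        (fderiv ℝ (fderiv ℝ g) (x, y) ∘L .inr ℝ E F) y :=
      (hd₂ (x, y)).hasFDerivAt.comp y (hasFDerivAt_prodMk_right x y)
    rw [hslice]
    exact ((ContinuousLinearMap.inr ℝ E F).precomp ℝ).hasFDerivAt.comp y hcomp
  have h := mul_norm_sq_le_fderiv_fderiv_apply_of_strongConvexOn hsc (by fun_prop)
    hder.differentiableAt v
  rw [hder.fderiv] at h
  simpa using h

lemma isCoercive_fderiv_fderiv_inr {x : E} (hm : 0 < m) (hg : ContDiff ℝ 2 g)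
    (hsc : StrongConvexOn univ m fun y => g (x, y)) (y : F) :
    IsCoercive
      ((fderiv ℝ (fderiv ℝ g) (x, y)).bilinearComp (.inr ℝ E F) (.inr ℝ E F)) :=
  ⟨m, hm, fun v => by
    simpa [pow_two, mul_assoc] using mul_norm_sq_le_fderiv_fderiv_inr_apply hg hsc y v⟩

lemma fderiv_minimizer_comp_inr_eq_zero (hg : Differentiable ℝ g)
    (hystar : ∀ x y, g (x, ystar x) ≤ g (x, y)) (x : E) :
    fderiv ℝ g (x, ystar x) ∘L .inr ℝ E F = 0 := by
  rw [← fderiv_comp_prodMk_right_s15 hg]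
  exact IsLocalMin.fderiv_eq_zero (.of_forall (hystar x))

lemma differentiable_minimizer [CompleteSpace E] [CompleteSpace F] (hm : 0 < m)
    (hg : ContDiff ℝ 2 g)
    (hsc : ∀ x, StrongConvexOn univ m fun y => g (x, y))
    (hystar : ∀ x y, g (x, ystar x) ≤ g (x, y)) : Differentiable ℝ ystar := by
  intro x
  have hd : Differentiable ℝ g := hg.differentiable two_ne_zero
  have hG : HasStrictFDerivAt (fun p => fderiv ℝ g p ∘L .inr ℝ E F)
      ((ContinuousLinearMap.inr ℝ E F).precomp ℝ ∘L fderiv ℝ (fderiv ℝ g) (x, ystar x))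
      (x, ystar x) :=
    ((ContinuousLinearMap.inr ℝ E F).precomp ℝ).hasStrictFDerivAt.comp _
      ((hg.fderiv_right (m := 1) (by norm_num)).hasStrictFDerivAt one_ne_zero)
  have hinv := isInvertible_of_isCoercive (isCoercive_fderiv_fderiv_inr hm hg (hsc x) (ystar x))
  have hψ : hG.implicitFunctionOfProdDomain hinv =ᶠ[𝓝 x] ystar := by
    filter_upwards [hG.eventually_apply_implicitFunctionOfProdDomain hinv] with x' hx'
    refine eq_of_fderiv_eq_of_strongConvexOn hm (hsc x') (by fun_prop) ?_
    rw [fderiv_comp_prodMk_right_s15 hd, fderiv_comp_prodMk_right_s15 hd, hx',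
      fderiv_minimizer_comp_inr_eq_zero hd hystar, fderiv_minimizer_comp_inr_eq_zero hd hystar]
  exact ((hG.hasStrictFDerivAt_implicitFunctionOfProdDomain hinv).congr_of_eventuallyEq
    hψ).hasFDerivAt.differentiableAt

lemma fderiv_fderiv_apply_fderiv_minimizer (hg : ContDiff ℝ 2 g)
    (hystar : ∀ x y, g (x, ystar x) ≤ g (x, y)) {x : E} (hx : DifferentiableAt ℝ ystar x)
    (h : E) (v : F) :
    fderiv ℝ (fderiv ℝ g) (x, ystar x) (h, fderiv ℝ ystar x h) (0, v) = 0 := by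
  have hd₂ : Differentiable ℝ (fderiv ℝ g) :=
    (hg.fderiv_right (m := 1) (by norm_num)).differentiable one_ne_zero
  have hcomp : HasFDerivAt (fun x' => fderiv ℝ g (x', ystar x') (0, v)) _ x :=
    ((hd₂ _).hasFDerivAt.comp x ((hasFDerivAt_id x).prodMk hx.hasFDerivAt)).clm_apply
      (hasFDerivAt_const ((0 : E), v) x)
  have hzero : (fun x' => fderiv ℝ g (x', ystar x') (0, v)) = fun _ => 0 := by
    ext x'
    simpa using DFunLike.congr_fun
      (fderiv_minimizer_comp_inr_eq_zero (hg.differentiable two_ne_zero) hystar x') v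
  rw [hzero] at hcomp
  simpa using DFunLike.congr_fun (hcomp.unique (hasFDerivAt_const (0 : ℝ) x)) h

lemma fderiv_comp_minimizer (hf : Differentiable ℝ f) (hg : ContDiff ℝ 2 g)
    (hystar : ∀ x y, g (x, ystar x) ≤ g (x, y)) {x : E} (hx : DifferentiableAt ℝ ystar x) {w : F}
    (hw : fderiv ℝ (fderiv ℝ g) (x, ystar x) (0, w) ∘L .inr ℝ E F =
      fderiv ℝ f (x, ystar x) ∘L .inr ℝ E F) :
    fderiv ℝ (fun x' => f (x', ystar x')) x =
      (fderiv ℝ f (x, ystar x) - fderiv ℝ (fderiv ℝ g) (x, ystar x) (0, w)) ∘L .inl ℝ E F := by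
  set H := fderiv ℝ (fderiv ℝ g) (x, ystar x)
  set A := fderiv ℝ ystar x
  have hchain : fderiv ℝ (fun x' => f (x', ystar x')) x =
      fderiv ℝ f (x, ystar x) ∘L (ContinuousLinearMap.id ℝ E).prod A :=
    ((hf _).hasFDerivAt.comp x ((hasFDerivAt_id x).prodMk hx.hasFDerivAt)).fderiv
  ext h
  have hsymm : H (h, A h) (0, w) = H (0, w) (h, A h) :=
    hg.contDiffAt.isSymmSndFDerivAt (by simp) _ _
  rw [fderiv_fderiv_apply_fderiv_minimizer hg hystar hx h w] at hsymm
  have hadjoint : H (0, w) (0, A h) = fderiv ℝ f (x, ystar x) (0, A h) :=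
    DFunLike.congr_fun hw (A h)
  have hsplit : (h, A h) = (h, 0) + (0, A h) := by simp
  rw [hsplit, map_add, hadjoint] at hsymm
  rw [hchain]
  simp only [ContinuousLinearMap.comp_apply, ContinuousLinearMap.prod_apply,
    ContinuousLinearMap.id_apply, ContinuousLinearMap.inl_apply, sub_apply]
  rw [hsplit, map_add]
  linarith

end Minimizer

section Penalty

set_option maxSynthPendingDepth 3

/-- The penalized derivative. Its restriction to `E` is dual to the search direction
`∇_x f (x, y) + lam * (∇_x g (x, y) - ∇_x g (x, z))`. Since full derivatives are used, its
restriction to `F` is `∂_y (f + lam * g) (x, y)` minus `lam * ∂_y g (x, z)`, and the latter vanishes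
when `z` minimizes `g (x, ·)`. -/
def penaltyFDeriv [NormedAddCommGroup E] [NormedSpace ℝ E] [NormedAddCommGroup F]
    [NormedSpace ℝ F] (f g : E × F → ℝ) (lam : ℝ) (x : E) (y z : F) : E × F →L[ℝ] ℝ :=
  fderiv ℝ f (x, y) + lam • (fderiv ℝ g (x, y) - fderiv ℝ g (x, z))

/-- The constant `C_λ` such that the penalized hypergradient has bias at most `C_λ / λ`; it does
not in fact depend on `λ`. -/
def penaltyBiasConst (lf0 lf1 lg1 lg2 m : ℝ) : ℝ :=
  4 * lf0 * lg1 / m ^ 2 * (lf1 + 2 * lf0 * lg2 / m)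

lemma mul_bias_le_penaltyBiasConst {lf0 lf1 lg1 lg2 m lam d : ℝ} (hm : 0 < m) (hmg : m ≤ lg1)
    (hlf1 : 0 ≤ lf1) (hlg2 : 0 ≤ lg2) (hlam : 0 ≤ lam) (hd : 0 ≤ d)
    (hdist : lam * (m * d) ≤ lf0) :
    lam * ((1 + lg1 / m) * (lf1 * d + lam * (lg2 * d ^ 2))) ≤
      penaltyBiasConst lf0 lf1 lg1 lg2 m := by
  have hlg1 : 0 ≤ lg1 := hm.le.trans hmg
  have hlf0 : 0 ≤ lf0 := le_trans (by positivity) hdist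
  have hlamd : lam * d ≤ lf0 / m := by
    rw [le_div_iff₀ hm]
    linarith
  have hcond : 1 + lg1 / m ≤ 2 * lg1 / m := by
    linarith [(one_le_div hm).mpr hmg, mul_div_assoc 2 lg1 m]
  calc lam * ((1 + lg1 / m) * (lf1 * d + lam * (lg2 * d ^ 2)))
      = (1 + lg1 / m) * (lam * d) * (lf1 + lg2 * (lam * d)) := by ring
    _ ≤ 2 * lg1 / m * (lf0 / m) * (lf1 + lg2 * (lf0 / m)) := by gcongr
    _ = 2 * lf0 * lg1 / m ^ 2 * (lf1 + 1 * lf0 * lg2 / m) := by ring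
    _ ≤ penaltyBiasConst lf0 lf1 lg1 lg2 m := by
      unfold penaltyBiasConst
      gcongr <;> norm_num

section Normed

variable [NormedAddCommGroup E] [NormedSpace ℝ E] [NormedAddCommGroup F] [NormedSpace ℝ F]
  {f g : E × F → ℝ} {lf1 lg1 lg2 m lam : ℝ} {x : E}

lemma norm_add_apply_comp_inl_le_of_coercive {B : E × F →L[ℝ] E × F →L[ℝ] ℝ}
    {T : E × F →L[ℝ] ℝ} {L : ℝ} {u : F} (hm : 0 < m) (hB : ∀ v, m * ‖v‖ ^ 2 ≤ B (0, v) (0, v))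
    (hL : ‖B ∘L .inr ℝ E F‖ ≤ L) (hu : (T + B (0, u)) ∘L .inr ℝ E F = 0) :
    ‖(T + B (0, u)) ∘L .inl ℝ E F‖ ≤ (1 + L / m) * ‖T‖ := by
  have hBu : m * ‖u‖ ^ 2 ≤ (-T ∘L .inr ℝ E F) u := by
    have h : T (0, u) + B (0, u) (0, u) = 0 := DFunLike.congr_fun hu u
    have hTu : (-T ∘L .inr ℝ E F) u = -T (0, u) := rfl
    linarith [hB u]
  have hnorm : m * ‖u‖ ≤ ‖T‖ := by
    simpa only [norm_neg] using
      (mul_norm_le_norm_of_mul_norm_sq_le_apply hBu).trans (norm_comp_inr_le (-T))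
  calc ‖(T + B (0, u)) ∘L .inl ℝ E F‖ ≤ ‖T‖ + ‖B (0, u)‖ :=
        (norm_comp_inl_le _).trans (norm_add_le _ _)
    _ ≤ ‖T‖ + L * ‖u‖ := by
      gcongr
      exact (B ∘L .inr ℝ E F).le_of_opNorm_le hL u
    _ ≤ ‖T‖ + L * (‖T‖ / m) := by
      have : 0 ≤ L := (norm_nonneg _).trans hL
      gcongr
      exact (le_div_iff₀' hm).mpr hnorm
    _ = (1 + L / m) * ‖T‖ := by ring

lemma norm_penaltyFDeriv_sub_le (hlam : 0 ≤ lam)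
    (hf1 : ∀ y y', ‖fderiv ℝ f (x, y) - fderiv ℝ f (x, y')‖ ≤ lf1 * ‖y - y'‖)
    (hg1 : ∀ y y', ‖fderiv ℝ g (x, y) - fderiv ℝ g (x, y')‖ ≤ lg1 * ‖y - y'‖) (y y' z z' : F) :
    ‖penaltyFDeriv f g lam x y z - penaltyFDeriv f g lam x y' z'‖ ≤
      (lf1 + lam * lg1) * ‖y - y'‖ + lam * lg1 * ‖z - z'‖ := by
  have hsplit : penaltyFDeriv f g lam x y z - penaltyFDeriv f g lam x y' z' =
      (fderiv ℝ f (x, y) - fderiv ℝ f (x, y')) +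
        lam • (fderiv ℝ g (x, y) - fderiv ℝ g (x, y')) -
        lam • (fderiv ℝ g (x, z) - fderiv ℝ g (x, z')) := by
    unfold penaltyFDeriv
    module
  calc _ ≤ ‖fderiv ℝ f (x, y) - fderiv ℝ f (x, y')‖ +
        ‖lam • (fderiv ℝ g (x, y) - fderiv ℝ g (x, y'))‖ +
        ‖lam • (fderiv ℝ g (x, z) - fderiv ℝ g (x, z'))‖ := by
        rw [hsplit]
        exact (norm_sub_le _ _).trans (by gcongr; exact norm_add_le _ _)
    _ ≤ lf1 * ‖y - y'‖ + lam * (lg1 * ‖y - y'‖) + lam * (lg1 * ‖z - z'‖) := by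
      simp only [norm_smul, Real.norm_of_nonneg hlam]
      gcongr
      exacts [hf1 y y', hg1 y y', hg1 z z']
    _ = (lf1 + lam * lg1) * ‖y - y'‖ + lam * lg1 * ‖z - z'‖ := by ring

lemma norm_penaltyFDeriv_sub_linearization_le (hlam : 0 ≤ lam) (hlg2 : 0 ≤ lg2)
    (hg : ContDiff ℝ 2 g)
    (hf1 : ∀ y y', ‖fderiv ℝ f (x, y) - fderiv ℝ f (x, y')‖ ≤ lf1 * ‖y - y'‖)
    (hg2 : ∀ y y', ‖fderiv ℝ (fderiv ℝ g) (x, y) - fderiv ℝ (fderiv ℝ g) (x, y')‖ ≤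
      lg2 * ‖y - y'‖) (y z : F) :
    ‖penaltyFDeriv f g lam x y z -
        (fderiv ℝ f (x, z) + fderiv ℝ (fderiv ℝ g) (x, z) (0, lam • (y - z)))‖ ≤
      lf1 * ‖y - z‖ + lam * (lg2 * ‖y - z‖ ^ 2) := by
  have hd₂ : Differentiable ℝ (fderiv ℝ g) :=
    (hg.fderiv_right (m := 1) (by norm_num)).differentiable one_ne_zero
  have hslice := fderiv_comp_prodMk_right_s15 hd₂ x
  have hrem : ‖fderiv ℝ g (x, y) - fderiv ℝ g (x, z) -
      fderiv ℝ (fderiv ℝ g) (x, z) (0, y - z)‖ ≤ lg2 * ‖y - z‖ ^ 2 := by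
    have h := norm_sub_sub_fderiv_le_of_fderiv_lipschitz (D := fun y' => fderiv ℝ g (x, y')) hlg2
      (by fun_prop) (fun a b => by
        rw [hslice, hslice, ← ContinuousLinearMap.sub_comp]
        exact (norm_comp_inr_le _).trans (hg2 a b)) z y
    rwa [hslice] at h
  have hsmul : ((0 : E), lam • (y - z)) = lam • ((0 : E), y - z) := by simp
  have hsplit : penaltyFDeriv f g lam x y z -
      (fderiv ℝ f (x, z) + fderiv ℝ (fderiv ℝ g) (x, z) (0, lam • (y - z))) =
      (fderiv ℝ f (x, y) - fderiv ℝ f (x, z)) + lam • (fderiv ℝ g (x, y) - fderiv ℝ g (x, z) -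
        fderiv ℝ (fderiv ℝ g) (x, z) (0, y - z)) := by
    rw [hsmul, map_smul]
    unfold penaltyFDeriv
    module
  calc _ ≤ ‖fderiv ℝ f (x, y) - fderiv ℝ f (x, z)‖ + lam * ‖fderiv ℝ g (x, y) -
        fderiv ℝ g (x, z) - fderiv ℝ (fderiv ℝ g) (x, z) (0, y - z)‖ := by
        rw [hsplit]
        refine (norm_add_le _ _).trans_eq ?_
        rw [norm_smul, Real.norm_of_nonneg hlam]
    _ ≤ lf1 * ‖y - z‖ + lam * (lg2 * ‖y - z‖ ^ 2) := by
      gcongr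
      exact hf1 y z

lemma penaltyFDeriv_comp_inr_eq_zero (hf : Differentiable ℝ f) (hg : Differentiable ℝ g)
    {y z : F} (hy : ∀ y', f (x, y) + lam * g (x, y) ≤ f (x, y') + lam * g (x, y'))
    (hz : ∀ y', g (x, z) ≤ g (x, y')) : penaltyFDeriv f g lam x y z ∘L .inr ℝ E F = 0 := by
  have hgz : fderiv ℝ g (x, z) ∘L .inr ℝ E F = 0 := by
    rw [← fderiv_comp_prodMk_right_s15 hg]
    exact IsLocalMin.fderiv_eq_zero (.of_forall hz)
  have hfg : (fderiv ℝ f (x, y) + lam • fderiv ℝ g (x, y)) ∘L .inr ℝ E F = 0 := by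
    rw [← fderiv_const_mul (hg _), ← fderiv_fun_add (hf _) ((hg _).const_mul lam),
      ← fderiv_comp_prodMk_right_s15 (hf.fun_add (hg.const_mul lam))]
    exact IsLocalMin.fderiv_eq_zero (.of_forall hy)
  simpa [penaltyFDeriv, smul_sub, ContinuousLinearMap.add_comp, ContinuousLinearMap.sub_comp,
    ContinuousLinearMap.smul_comp, hgz] using hfg

end Normed

variable [NormedAddCommGroup E] [NormedSpace ℝ E] [NormedAddCommGroup F] [InnerProductSpace ℝ F]
  {f g : E × F → ℝ} {lf0 lf1 lg1 lg2 m lam : ℝ} {ystar : E → F} {x : E} {ylam : F}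

lemma le_of_strongConvexOn_of_fderiv_lipschitz_right [Nontrivial F] (hg : Differentiable ℝ g)
    (hsc : StrongConvexOn univ m fun y => g (x, y))
    (hg1 : ∀ y y', ‖fderiv ℝ g (x, y) - fderiv ℝ g (x, y')‖ ≤ lg1 * ‖y - y'‖) : m ≤ lg1 := by
  refine le_of_strongConvexOn_of_fderiv_lipschitz hsc (by fun_prop) fun y y' => ?_
  rw [fderiv_comp_prodMk_right_s15 hg, fderiv_comp_prodMk_right_s15 hg, ← ContinuousLinearMap.sub_comp]
  exact (norm_comp_inr_le _).trans (hg1 y y')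

variable [CompleteSpace E] [CompleteSpace F]

lemma norm_penaltyFDeriv_sub_fderiv_comp_minimizer_le (hm : 0 < m) (hlam : 0 ≤ lam)
    (hlg1 : 0 ≤ lg1) (hlg2 : 0 ≤ lg2) (hf : Differentiable ℝ f) (hg : ContDiff ℝ 2 g)
    (hsc : ∀ x, StrongConvexOn univ m fun y => g (x, y))
    (hystar : ∀ x y, g (x, ystar x) ≤ g (x, y))
    (hf1 : ∀ y y', ‖fderiv ℝ f (x, y) - fderiv ℝ f (x, y')‖ ≤ lf1 * ‖y - y'‖)
    (hg1 : ∀ y y', ‖fderiv ℝ g (x, y) - fderiv ℝ g (x, y')‖ ≤ lg1 * ‖y - y'‖)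
    (hg2 : ∀ y y', ‖fderiv ℝ (fderiv ℝ g) (x, y) - fderiv ℝ (fderiv ℝ g) (x, y')‖ ≤
      lg2 * ‖y - y'‖)
    (hylam : ∀ y, f (x, ylam) + lam * g (x, ylam) ≤ f (x, y) + lam * g (x, y)) :
    ‖penaltyFDeriv f g lam x ylam (ystar x) ∘L .inl ℝ E F -
        fderiv ℝ (fun x' => f (x', ystar x')) x‖ ≤
      (1 + lg1 / m) * (lf1 * ‖ylam - ystar x‖ + lam * (lg2 * ‖ylam - ystar x‖ ^ 2)) := by
  have hd : Differentiable ℝ g := hg.differentiable two_ne_zero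
  have hd₂ : Differentiable ℝ (fderiv ℝ g) :=
    (hg.fderiv_right (m := 1) (by norm_num)).differentiable one_ne_zero
  set H := fderiv ℝ (fderiv ℝ g) (x, ystar x) with hH
  obtain ⟨w, hw⟩ : ∃ w : F, H (0, w) ∘L .inr ℝ E F = fderiv ℝ f (x, ystar x) ∘L .inr ℝ E F :=
    (isInvertible_of_isCoercive
      (isCoercive_fderiv_fderiv_inr hm hg (hsc x) (ystar x))).surjective _
  have hHnorm : ‖H ∘L .inr ℝ E F‖ ≤ lg1 := by
    rw [hH, ← fderiv_comp_prodMk_right_s15 hd₂]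
    exact norm_fderiv_le_of_lip' ℝ hlg1 (.of_forall fun y => hg1 y _)
  set P := penaltyFDeriv f g lam x ylam (ystar x) with hP
  set T := P - (fderiv ℝ f (x, ystar x) + H (0, lam • (ylam - ystar x))) with hT
  set u := lam • (ylam - ystar x) + w
  have hHu : T + H (0, u) = P - (fderiv ℝ f (x, ystar x) - H (0, w)) := by
    have hsplit : ((0 : E), u) = (0, lam • (ylam - ystar x)) + (0, w) := by simp [u]
    rw [hsplit, map_add, hT]
    abel
  have hbias : P ∘L .inl ℝ E F - fderiv ℝ (fun x' => f (x', ystar x')) x =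
      (T + H (0, u)) ∘L .inl ℝ E F := by
    rw [fderiv_comp_minimizer hf hg hystar (differentiable_minimizer hm hg hsc hystar x) hw,
      hHu, ← ContinuousLinearMap.sub_comp]
  have hstat : (T + H (0, u)) ∘L .inr ℝ E F = 0 := by
    rw [hHu, ContinuousLinearMap.sub_comp, ContinuousLinearMap.sub_comp, hw, sub_self, sub_zero,
      hP, penaltyFDeriv_comp_inr_eq_zero hf hd hylam (hystar x)]
  rw [hbias]
  refine (norm_add_apply_comp_inl_le_of_coercive hm
    (mul_norm_sq_le_fderiv_fderiv_inr_apply hg (hsc x) _) hHnorm hstat).trans ?_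
  gcongr
  exact norm_penaltyFDeriv_sub_linearization_le hlam hlg2 hg hf1 hg2 ylam (ystar x)

lemma norm_penaltyFDeriv_sub_fderiv_comp_minimizer_le_div [Nontrivial F] (hm : 0 < m)
    (hlam : 2 * lf1 / m ≤ lam) (hf : Differentiable ℝ f) (hg : ContDiff ℝ 2 g)
    (hsc : ∀ x, StrongConvexOn univ m fun y => g (x, y))
    (hystar : ∀ x y, g (x, ystar x) ≤ g (x, y))
    (hf0 : ‖fderiv ℝ (fun y => f (x, y)) ylam‖ ≤ lf0)
    (hf1 : ∀ y y', ‖fderiv ℝ f (x, y) - fderiv ℝ f (x, y')‖ ≤ lf1 * ‖y - y'‖)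
    (hg1 : ∀ y y', ‖fderiv ℝ g (x, y) - fderiv ℝ g (x, y')‖ ≤ lg1 * ‖y - y'‖)
    (hg2 : ∀ y y', ‖fderiv ℝ (fderiv ℝ g) (x, y) - fderiv ℝ (fderiv ℝ g) (x, y')‖ ≤
      lg2 * ‖y - y'‖)
    (hylam : ∀ y, f (x, ylam) + lam * g (x, ylam) ≤ f (x, y) + lam * g (x, y)) :
    ‖penaltyFDeriv f g lam x ylam (ystar x) ∘L .inl ℝ E F -
        fderiv ℝ (fun x' => f (x', ystar x')) x‖ ≤ penaltyBiasConst lf0 lf1 lg1 lg2 m / lam := by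
  have hd : Differentiable ℝ g := hg.differentiable two_ne_zero
  have hlf1 : 0 ≤ lf1 := nonneg_of_forall_norm_sub_le hf1
  have hlg2 : 0 ≤ lg2 := nonneg_of_forall_norm_sub_le hg2
  have hmg : m ≤ lg1 := le_of_strongConvexOn_of_fderiv_lipschitz_right hd (hsc x) hg1
  have hlam₀ : 0 ≤ lam := le_trans (by positivity) hlam
  refine (norm_penaltyFDeriv_sub_fderiv_comp_minimizer_le hm hlam₀ (hm.le.trans hmg) hlg2 hf hg
    hsc hystar hf1 hg1 hg2 hylam).trans ?_
  rcases hlam₀.eq_or_lt with rfl | hpos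
  · -- `lam = 0` forces `lf1 = 0`, so the bias vanishes, as does the junk value `C / 0`.
    have hlf1_eq : lf1 = 0 := by linarith [(div_le_iff₀ hm).mp hlam]
    simp [hlf1_eq]
  · rw [le_div_iff₀' hpos]
    refine mul_bias_le_penaltyBiasConst hm hmg hlf1 hlg2 hlam₀ (norm_nonneg _) ?_
    exact (mul_norm_sub_minimizer_le_norm_fderiv hlam₀ (by fun_prop) (hsc x) (by fun_prop)
      (hystar x) hylam).trans hf0

lemma norm_penaltyFDeriv_comp_inl_sub_le [Nontrivial F] (hm : 0 < m)
    (hlam : 2 * lf1 / m ≤ lam) (hf : Differentiable ℝ f) (hg : ContDiff ℝ 2 g)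
    (hsc : ∀ x, StrongConvexOn univ m fun y => g (x, y))
    (hystar : ∀ x y, g (x, ystar x) ≤ g (x, y))
    (hf0 : ‖fderiv ℝ (fun y => f (x, y)) ylam‖ ≤ lf0)
    (hf1 : ∀ y y', ‖fderiv ℝ f (x, y) - fderiv ℝ f (x, y')‖ ≤ lf1 * ‖y - y'‖)
    (hg1 : ∀ y y', ‖fderiv ℝ g (x, y) - fderiv ℝ g (x, y')‖ ≤ lg1 * ‖y - y'‖)
    (hg2 : ∀ y y', ‖fderiv ℝ (fderiv ℝ g) (x, y) - fderiv ℝ (fderiv ℝ g) (x, y')‖ ≤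
      lg2 * ‖y - y'‖)
    (hylam : ∀ y, f (x, ylam) + lam * g (x, ylam) ≤ f (x, y) + lam * g (x, y)) (yhat zhat : F) :
    ‖penaltyFDeriv f g lam x yhat zhat ∘L .inl ℝ E F -
        fderiv ℝ (fun x' => f (x', ystar x')) x‖ ≤
      2 * lg1 * lam * ‖yhat - ylam‖ + lg1 * lam * ‖zhat - ystar x‖ +
        penaltyBiasConst lf0 lf1 lg1 lg2 m / lam := by
  have hlf1 : 0 ≤ lf1 := nonneg_of_forall_norm_sub_le hf1
  have hmg : m ≤ lg1 :=
    le_of_strongConvexOn_of_fderiv_lipschitz_right (hg.differentiable two_ne_zero) (hsc x) hg1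
  have hlam₀ : 0 ≤ lam := le_trans (by positivity) hlam
  have hlf1_le : lf1 ≤ lam * lg1 := by
    have hlf1_le_lam : 2 * lf1 ≤ lam * m := (div_le_iff₀ hm).mp hlam
    linarith [mul_le_mul_of_nonneg_left hmg hlam₀]
  have hinexact : ‖penaltyFDeriv f g lam x yhat zhat ∘L .inl ℝ E F -
      penaltyFDeriv f g lam x ylam (ystar x) ∘L .inl ℝ E F‖ ≤
      2 * lg1 * lam * ‖yhat - ylam‖ + lg1 * lam * ‖zhat - ystar x‖ := by
    rw [← ContinuousLinearMap.sub_comp]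
    calc _ ≤ (lf1 + lam * lg1) * ‖yhat - ylam‖ + lam * lg1 * ‖zhat - ystar x‖ :=
          (norm_comp_inl_le _).trans (norm_penaltyFDeriv_sub_le hlam₀ hf1 hg1 _ _ _ _)
      _ ≤ (lam * lg1 + lam * lg1) * ‖yhat - ylam‖ + lam * lg1 * ‖zhat - ystar x‖ := by gcongr
      _ = _ := by ring
  exact (norm_sub_le_norm_sub_add_norm_sub _ _ _).trans (add_le_add hinexact
    (norm_penaltyFDeriv_sub_fderiv_comp_minimizer_le_div hm hlam hf hg hsc hystar hf0 hf1 hg1 hg2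
      hylam))

end Penalty

section Descent

set_option maxSynthPendingDepth 3

variable [NormedAddCommGroup E] [InnerProductSpace ℝ E] [CompleteSpace E]

lemma toDual_penalty_direction [NormedAddCommGroup F] [NormedSpace ℝ F] {f g : E × F → ℝ}
    (hf : Differentiable ℝ f) (hg : Differentiable ℝ g) (lam : ℝ) (x : E) (y z : F) :
    toDual ℝ E (gradient (fun x' => f (x', y)) x +
      lam • (gradient (fun x' => g (x', y)) x - gradient (fun x' => g (x', z)) x)) =
      penaltyFDeriv f g lam x y z ∘L .inl ℝ E F := by
  simp only [map_add, map_sub, map_smul, toDual_gradient, fderiv_comp_prodMk_left_s15 hf,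
    fderiv_comp_prodMk_left_s15 hg, penaltyFDeriv, ContinuousLinearMap.add_comp,
    ContinuousLinearMap.smul_comp, ContinuousLinearMap.sub_comp]

variable [NormedAddCommGroup F] [InnerProductSpace ℝ F] [CompleteSpace F]
  {f g : E × F → ℝ} {lf0 lf1 lg1 lg2 m lam : ℝ} {ystar : E → F} {x : E} {ylam : F}

lemma norm_direction_sub_gradient_sq_le (hm : 0 < m) (hlam : 2 * lf1 / m ≤ lam)
    (hf : Differentiable ℝ f) (hg : ContDiff ℝ 2 g)
    (hsc : ∀ x, StrongConvexOn univ m fun y => g (x, y))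
    (hystar : ∀ x y, g (x, ystar x) ≤ g (x, y))
    (hf0 : ‖gradient (fun y => f (x, y)) ylam‖ ≤ lf0)
    (hf1 : ∀ y y', ‖fderiv ℝ f (x, y) - fderiv ℝ f (x, y')‖ ≤ lf1 * ‖y - y'‖)
    (hg1 : ∀ y y', ‖fderiv ℝ g (x, y) - fderiv ℝ g (x, y')‖ ≤ lg1 * ‖y - y'‖)
    (hg2 : ∀ y y', ‖fderiv ℝ (fderiv ℝ g) (x, y) - fderiv ℝ (fderiv ℝ g) (x, y')‖ ≤
      lg2 * ‖y - y'‖)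
    (hylam : ∀ y, f (x, ylam) + lam * g (x, ylam) ≤ f (x, y) + lam * g (x, y)) {yhat zhat : F}
    {q : E} (hq : q = gradient (fun x' => f (x', yhat)) x +
      lam • (gradient (fun x' => g (x', yhat)) x - gradient (fun x' => g (x', zhat)) x)) :
    ‖q - gradient (fun x' => f (x', ystar x')) x‖ ^ 2 ≤
      3 * (4 * lg1 ^ 2 * lam ^ 2 * ‖yhat - ylam‖ ^ 2 + lg1 ^ 2 * lam ^ 2 * ‖zhat - ystar x‖ ^ 2 +
        penaltyBiasConst lf0 lf1 lg1 lg2 m ^ 2 / lam ^ 2) := by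
  rcases subsingleton_or_nontrivial F with hF | hF
  · have hq_eq : q = gradient (fun x' => f (x', ystar x')) x := by
      simp [hq, Subsingleton.elim zhat yhat, fun x' => Subsingleton.elim (ystar x') yhat]
    rw [hq_eq, sub_self, norm_zero, zero_pow two_ne_zero]
    positivity
  have hdual : ‖q - gradient (fun x' => f (x', ystar x')) x‖ =
      ‖penaltyFDeriv f g lam x yhat zhat ∘L .inl ℝ E F -
        fderiv ℝ (fun x' => f (x', ystar x')) x‖ := by
    rw [← (toDual ℝ E).norm_map, map_sub, toDual_gradient, hq,
      toDual_penalty_direction hf (hg.differentiable two_ne_zero)]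
  rw [gradient, LinearIsometryEquiv.norm_map] at hf0
  set a := 2 * lg1 * lam * ‖yhat - ylam‖
  set b := lg1 * lam * ‖zhat - ystar x‖
  set c := penaltyBiasConst lf0 lf1 lg1 lg2 m / lam
  calc ‖q - gradient (fun x' => f (x', ystar x')) x‖ ^ 2 ≤ (a + b + c) ^ 2 := by
        rw [hdual]
        gcongr
        exact norm_penaltyFDeriv_comp_inl_sub_le hm hlam hf hg hsc hystar hf0 hf1 hg1 hg2 hylam
          yhat zhat
    _ ≤ 3 * (a ^ 2 + b ^ 2 + c ^ 2) := by
      linarith [sq_nonneg (a - b), sq_nonneg (a - c), sq_nonneg (b - c)]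
    _ = _ := by ring

theorem deterministic_descent_step_general {lF1 s : ℝ} (hm : 0 < m) (hs : 0 ≤ s)
    (hstep : s * lF1 ≤ 1 / 2) (hlam : 2 * lf1 / m ≤ lam)
    (hf : Differentiable ℝ f) (hg : ContDiff ℝ 2 g)
    (hsc : ∀ x, StrongConvexOn univ m fun y => g (x, y))
    (hystar : ∀ x y, g (x, ystar x) ≤ g (x, y))
    (hF : ∀ x₁ x₂, ‖gradient (fun x => f (x, ystar x)) x₁ -
      gradient (fun x => f (x, ystar x)) x₂‖ ≤ lF1 * ‖x₁ - x₂‖)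
    (hf0 : ‖gradient (fun y => f (x, y)) ylam‖ ≤ lf0)
    (hf1 : ∀ y y', ‖fderiv ℝ f (x, y) - fderiv ℝ f (x, y')‖ ≤ lf1 * ‖y - y'‖)
    (hg1 : ∀ y y', ‖fderiv ℝ g (x, y) - fderiv ℝ g (x, y')‖ ≤ lg1 * ‖y - y'‖)
    (hg2 : ∀ y y', ‖fderiv ℝ (fderiv ℝ g) (x, y) - fderiv ℝ (fderiv ℝ g) (x, y')‖ ≤
      lg2 * ‖y - y'‖)
    (hylam : ∀ y, f (x, ylam) + lam * g (x, ylam) ≤ f (x, y) + lam * g (x, y)) {yhat zhat : F}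
    {q : E} (hq : q = gradient (fun x' => f (x', yhat)) x +
      lam • (gradient (fun x' => g (x', yhat)) x - gradient (fun x' => g (x', zhat)) x)) :
    f (x - s • q, ystar (x - s • q)) - f (x, ystar x) ≤
      -(s / 2) * ‖gradient (fun x' => f (x', ystar x')) x‖ ^ 2 - s / 4 * ‖q‖ ^ 2 +
        3 * s / 2 * (4 * lg1 ^ 2 * lam ^ 2 * ‖yhat - ylam‖ ^ 2 +
          lg1 ^ 2 * lam ^ 2 * ‖zhat - ystar x‖ ^ 2 +
          penaltyBiasConst lf0 lf1 lg1 lg2 m ^ 2 / lam ^ 2) := by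
  have hFd : Differentiable ℝ fun x' => f (x', ystar x') :=
    hf.comp (differentiable_id.prodMk (differentiable_minimizer hm hg hsc hystar))
  have hdescent := inexact_gradient_step_le hs hstep hFd hF x q
  have herror := mul_le_mul_of_nonneg_left (norm_direction_sub_gradient_sq_le hm hlam hf hg hsc
    hystar hf0 hf1 hg1 hg2 hylam hq) (div_nonneg hs zero_le_two)
  linarith

end Descent

theorem deterministic_descent_step
    (dx dy : ℕ)
    (f g : EuclideanSpace ℝ (Fin dx) × EuclideanSpace ℝ (Fin dy) → ℝ)
    (lf0 lf1 lg1 lg2 μg lF1 ξ α : ℝ)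
    (hμg : 0 < μg) (hlF1 : 0 < lF1) (hξ : 0 < ξ) (hα : 0 < α)
    (hf : ContDiff ℝ 1 f)
    (hf1 : ∀ p q, ‖fderiv ℝ f p - fderiv ℝ f q‖ ≤ lf1 * ‖p - q‖)
    (hg : ContDiff ℝ 2 g)
    (hg1 : ∀ p q, ‖fderiv ℝ g p - fderiv ℝ g q‖ ≤ lg1 * ‖p - q‖)
    (hg2 : ∀ p q, ‖fderiv ℝ (fderiv ℝ g) p - fderiv ℝ (fderiv ℝ g) q‖ ≤ lg2 * ‖p - q‖)
    (hfy0 : ∀ x y, ‖gradient (fun y' => f (x, y')) y‖ ≤ lf0)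
    (hsc : ∀ x, StrongConvexOn univ μg (fun y => g (x, y)))
    (ystar : EuclideanSpace ℝ (Fin dx) → EuclideanSpace ℝ (Fin dy))
    (hystar : ∀ x y, g (x, ystar x) ≤ g (x, y))
    (hFdiff : Differentiable ℝ (fun x => f (x, ystar x)))
    (hFlip : ∀ x₁ x₂, ‖gradient (fun x => f (x, ystar x)) x₁ -
        gradient (fun x => f (x, ystar x)) x₂‖ ≤ lF1 * ‖x₁ - x₂‖)
    (ystarlam : ℝ → EuclideanSpace ℝ (Fin dx) → EuclideanSpace ℝ (Fin dy))
    (hystarlam : ∀ lam x, 2 * lf1 / μg ≤ lam → ∀ y,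
      f (x, ystarlam lam x) + lam * (g (x, ystarlam lam x) - g (x, ystar x)) ≤
      f (x, y) + lam * (g (x, y) - g (x, ystar x)))
    (hstep : ξ * α * lF1 ≤ 1 / 2) :
    ∀ (x : EuclideanSpace ℝ (Fin dx)) (yhat zhat : EuclideanSpace ℝ (Fin dy)) (lam : ℝ),
      2 * lf1 / μg ≤ lam →
      ∀ q : EuclideanSpace ℝ (Fin dx),
        q = gradient (fun x' => f (x', yhat)) x +
          lam • (gradient (fun x' => g (x', yhat)) x - gradient (fun x' => g (x', zhat)) x) →
        f (x - (ξ * α) • q, ystar (x - (ξ * α) • q)) - f (x, ystar x) ≤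
          -(ξ * α / 2) * ‖gradient (fun x' => f (x', ystar x')) x‖ ^ 2 -
            ξ * α / 4 * ‖q‖ ^ 2 +
            3 * ξ * α / 2 *
              (4 * lg1 ^ 2 * lam ^ 2 * ‖yhat - ystarlam lam x‖ ^ 2 +
                lg1 ^ 2 * lam ^ 2 * ‖zhat - ystar x‖ ^ 2 +
                (4 * lf0 * lg1 / μg ^ 2 * (lf1 + 2 * lf0 * lg2 / μg)) ^ 2 / lam ^ 2) := by
  intro x yhat zhat lam hlam q hq
  simpa only [penaltyBiasConst, mul_assoc] using deterministic_descent_step_general hμg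
    (mul_pos hξ hα).le hstep hlam (hf.differentiable one_ne_zero) hg hsc hystar hFlip (hfy0 x _)
    (fun y y' => by simpa using hf1 (x, y) (x, y')) (fun y y' => by simpa using hg1 (x, y) (x, y'))
    (fun y y' => by simpa using hg2 (x, y) (x, y'))
    (fun y => by linarith [hystarlam lam x hlam y]) hq
end
end
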